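/- arXiv:2208.01962 — 2 statements merged into one kernel-verified Lean document; each statement's English description precedes it below -/
import Mathlib

section
/- In the discriminant group A_M, the numbers of nonzero elements of given order k and given value g of the discriminant quadratic form q_M (with g ∈ ℚ/2ℤ) are: for k = 2: exactly 3 elements with g = 0, exactly 8 with g = 1/2, exactly 4 with g = 1, and none with g = 3/2; for k = 4: exactly 12 elements with each of g = 0, 1/2, 1, 3/2. Moreover, under the action on A_M of the image of O(M) → O(A_M), each of these sets is a single orbit, except the set of elements of order 2 with q_M-value 1, which is the disjoint union of exactly two orbits, of cardinalities 1 and 3. -/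
/-!
Modulo `A3⁴ ⊕ A1²` a dual vector of `M` is given by glue classes `C₀, …, C₃ ∈ ℤ/4` and
`d₀, d₁ ∈ ℤ/2` subject to one congruence, integrality of the pairing with `μ` (`mem_dual`), and `μ`
itself has all classes equal to one. Hence the differences `C₁ - C₀, C₂ - C₀, d₀ - C₀, d₁ - C₀`
identify `A_M` with `(ℤ/4)² × (ℤ/2)²` (`cls_eq_zero`, `discEquiv`). Since `M` is even, the
discriminant form is computed on explicit representatives (`qM_compat`, `bq_repD`), and the numbers
of elements become a count in a group of order 64.

Permuting the four copies of `A3`, exchanging the two copies of `A1`, and multiplying by `-1` are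
isometries of `M`. Their action on the finite model (`discRel_actD`) joins any two elements of the
same order and value, except in order 2 and value 1, where it joins three of the four elements
(`orbits_two`, `orbits_four`). The remaining element is the class of half the sum of the `A1`
generators. It contains a vector of square `-1`, while a sum-of-squares expression of the form shows
that the class `(0, 2, 1, 1)` contains none (`norm_ne`), so no isometry moves it into the orbit of
that class (`not_discRel`).
-/

noncomputable section
open Matrix

namespace K3Paper

/-! ### Generic lattice machinery over ℚ-ambient spaces -/

abbrev Amb (n : ℕ) := Fin n → ℚ

/-- bilinear form attached to a Gram matrix -/
def bq {n : ℕ} (G : Matrix (Fin n) (Fin n) ℚ) (x y : Amb n) : ℚ := x ⬝ᵥ (G *ᵥ y)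

/-- the form, as a ℤ-linear map in the first variable (second variable fixed) -/
def bqL {n : ℕ} (G : Matrix (Fin n) (Fin n) ℚ) (y : Amb n) : Amb n →ₗ[ℤ] ℚ where
  toFun x := bq G x y
  map_add' x x' := by simp [bq, add_dotProduct]
  map_smul' k x := by
    show (k • x) ⬝ᵥ (G *ᵥ y) = k • (x ⬝ᵥ (G *ᵥ y))
    exact smul_dotProduct k x (G *ᵥ y)

/-- the image of ℤ inside ℚ, as a ℤ-submodule -/
def intQ : Submodule ℤ ℚ := LinearMap.range (Algebra.linearMap ℤ ℚ)

/-- the dual lattice of the ℤ-span of `T` (inside the ℚ-span of `T`) -/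
def dualLat {n : ℕ} (G : Matrix (Fin n) (Fin n) ℚ) (T : Set (Amb n)) : Submodule ℤ (Amb n) :=
  (Submodule.span ℚ T).restrictScalars ℤ ⊓ ⨅ y ∈ T, Submodule.comap (bqL G y) intQ

/-- the discriminant group `A_S = S^*/S` of the ℤ-span of `T` -/
abbrev disc {n : ℕ} (G : Matrix (Fin n) (Fin n) ℚ) (T : Set (Amb n)) :=
  ↥(dualLat G T) ⧸ (Submodule.span ℤ T).comap (dualLat G T).subtype

/-- class of a dual vector in the discriminant group -/
def discMk {n : ℕ} (G : Matrix (Fin n) (Fin n) ℚ) (T : Set (Amb n))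
    (x : ↥(dualLat G T)) : disc G T := Submodule.Quotient.mk x

/-- the orthogonal complement of `T` inside the lattice `A` -/
def orthoIn {n : ℕ} (G : Matrix (Fin n) (Fin n) ℚ) (A : Submodule ℤ (Amb n))
    (T : Set (Amb n)) : Submodule ℤ (Amb n) :=
  A ⊓ ⨅ y ∈ T, LinearMap.ker (bqL G y)

def IsIntegral {n : ℕ} (G : Matrix (Fin n) (Fin n) ℚ) (A : Set (Amb n)) : Prop :=
  ∀ x ∈ A, ∀ y ∈ A, ∃ k : ℤ, bq G x y = k

def IsEven {n : ℕ} (G : Matrix (Fin n) (Fin n) ℚ) (A : Set (Amb n)) : Prop :=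
  ∀ x ∈ A, ∃ k : ℤ, bq G x x = 2 * k

def NegDef {n : ℕ} (G : Matrix (Fin n) (Fin n) ℚ) (A : Set (Amb n)) : Prop :=
  ∀ x ∈ A, x ≠ 0 → bq G x x < 0

/-- the quotient group `B/A` of a pair of lattices -/
abbrev quotBy {n : ℕ} (A B : Submodule ℤ (Amb n)) := ↥B ⧸ Submodule.comap B.subtype A

/-- the index of `A` in `B` -/
def subIndex {n : ℕ} (A B : Submodule ℤ (Amb n)) : ℕ := Nat.card (quotBy A B)

/-- `A` is a primitive sublattice of `Q` (the quotient is torsion-free) -/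
def PrimIn {n : ℕ} (A Q : Submodule ℤ (Amb n)) : Prop :=
  ∀ x ∈ Q, ∀ k : ℤ, k ≠ 0 → k • x ∈ A → x ∈ A

/-- isometry between two lattices, possibly in different ambient spaces -/
def LatIsom {n₁ n₂ : ℕ} (G₁ : Matrix (Fin n₁) (Fin n₁) ℚ) (S₁ : Submodule ℤ (Amb n₁))
    (G₂ : Matrix (Fin n₂) (Fin n₂) ℚ) (S₂ : Submodule ℤ (Amb n₂)) : Prop :=
  ∃ φ : ↥S₁ ≃ₗ[ℤ] ↥S₂, ∀ x y : ↥S₁, bq G₁ ↑x ↑y = bq G₂ ↑(φ x) ↑(φ y)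

/-! integral-coordinate lattices -/

/-- bilinear form of an integral Gram matrix on `ℤ^n` -/
def bz {n : ℕ} (H : Matrix (Fin n) (Fin n) ℤ) (x y : Fin n → ℤ) : ℤ := x ⬝ᵥ (H *ᵥ y)

/-- isometry from a ℚ-ambient lattice onto all of `ℤ^m` with Gram matrix `H` -/
def LatIsomToZ {n m : ℕ} (G : Matrix (Fin n) (Fin n) ℚ) (S : Submodule ℤ (Amb n))
    (H : Matrix (Fin m) (Fin m) ℤ) : Prop :=
  ∃ φ : ↥S ≃ₗ[ℤ] (Fin m → ℤ), ∀ x y : ↥S, bq G ↑x ↑y = ((bz H (φ x) (φ y) : ℤ) : ℚ)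

/-- `φ` is a primitive, form-preserving embedding of the lattice `S` into `ℤ^m`
with Gram matrix `H` -/
def IsPrimEmb {n m : ℕ} (G : Matrix (Fin n) (Fin n) ℚ) (S : Submodule ℤ (Amb n))
    (H : Matrix (Fin m) (Fin m) ℤ) (φ : ↥S →ₗ[ℤ] (Fin m → ℤ)) : Prop :=
  Function.Injective φ ∧ (∀ x y : ↥S, bq G ↑x ↑y = ((bz H (φ x) (φ y) : ℤ) : ℚ)) ∧
    ∀ (v : Fin m → ℤ) (k : ℤ), k ≠ 0 → k • v ∈ LinearMap.range φ → v ∈ LinearMap.range φ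

/-- isometry of `ℤ^m` with Gram matrix `H` -/
def IsIsomZ {m : ℕ} (H : Matrix (Fin m) (Fin m) ℤ) (θ : (Fin m → ℤ) ≃ₗ[ℤ] (Fin m → ℤ)) : Prop :=
  ∀ x y, bz H (θ x) (θ y) = bz H x y

/-- the standard lattice `ℤ^n ⊆ ℚ^n` -/
def stdLat (n : ℕ) : Submodule ℤ (Amb n) :=
  Submodule.span ℤ (Set.range fun i => (Pi.single i 1 : Amb n))

/-- minimal number of generators of the discriminant group -/
def latLen {n : ℕ} (G : Matrix (Fin n) (Fin n) ℚ) (T : Set (Amb n)) : ℕ :=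
  sInf {k | ∃ f : Fin k → disc G T, Submodule.span ℤ (Set.range f) = ⊤}

/-- extending the ambient space by one coordinate of square `c`, orthogonal to the rest -/
def extGram {n : ℕ} (G : Matrix (Fin n) (Fin n) ℚ) (c : ℚ) :
    Matrix (Fin (n+1)) (Fin (n+1)) ℚ :=
  Matrix.of fun i j =>
    if hi : (i : ℕ) < n then
      if hj : (j : ℕ) < n then G ⟨i, hi⟩ ⟨j, hj⟩ else 0
    else if (j : ℕ) < n then 0 else c

/-- extending a vector by a zero coordinate -/
def extV {n : ℕ} (x : Amb n) : Amb (n+1) :=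
  fun k => if h : (k : ℕ) < n then x ⟨k, h⟩ else 0

/-- the added last basis vector -/
def lastV (n : ℕ) : Amb (n+1) := Pi.single (Fin.last n) 1



/-! ### The lattice `W` and the K3 lattice `Λ` -/

/-- entries of the Gram matrix of `W = D4⁴ ⊕ A1² ⊕ ⟨-4⟩ ⊕ ⟨4⟩ ⊕ ⟨2⟩ ⊕ ⟨2⟩` -/
def gramWent (i j : ℕ) : ℚ :=
  if i < 16 ∧ j < 16 then
    if i / 4 = j / 4 then
      if i = j then -2 else if i % 4 = 2 ∨ j % 4 = 2 then 1 else 0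
    else 0
  else if i = j then
    if i < 18 then -2 else if i = 18 then -4 else if i = 19 then 4 else 2
  else 0

def gramW : Matrix (Fin 22) (Fin 22) ℚ := Matrix.of fun i j => gramWent i j

/-- standard basis vectors of the 22-dimensional ambient space -/
def sb (i : Fin 22) : Amb 22 := Pi.single i 1

def eW (i : Fin 4) : Amb 22 := sb ⟨i.1, by have := i.isLt; omega⟩
def fW (i : Fin 4) : Amb 22 := sb ⟨i.1 + 4, by have := i.isLt; omega⟩
def gW (i : Fin 4) : Amb 22 := sb ⟨i.1 + 8, by have := i.isLt; omega⟩
def hW (i : Fin 4) : Amb 22 := sb ⟨i.1 + 12, by have := i.isLt; omega⟩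
def a1V : Amb 22 := sb 16
def a2V : Amb 22 := sb 17
def sgV : Amb 22 := sb 18
def rhV : Amb 22 := sb 19
def om1V : Amb 22 := sb 20
def om2V : Amb 22 := sb 21

def chiV : Amb 22 := (2:ℚ)⁻¹ • (rhV + sgV)
def alV : Amb 22 := (4:ℚ)⁻¹ • (rhV + sgV) + (2:ℚ)⁻¹ • (eW 0 + eW 1 + fW 0 + fW 3)
def beV : Amb 22 := (4:ℚ)⁻¹ • (rhV - sgV) + (2:ℚ)⁻¹ • (fW 0 + fW 1 + gW 0 + gW 3)
def gaV : Amb 22 := (4:ℚ)⁻¹ • (rhV + sgV) + (2:ℚ)⁻¹ • (gW 0 + gW 1 + hW 0 + hW 3)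
def deV : Amb 22 := (4:ℚ)⁻¹ • (rhV - sgV) + (2:ℚ)⁻¹ • (hW 0 + hW 1 + eW 0 + eW 3)
def epV : Amb 22 := (2:ℚ)⁻¹ • (rhV + fW 1 + fW 3 + hW 1 + hW 3 + a1V + a2V)
def zeV : Amb 22 := (2:ℚ)⁻¹ • (eW 0 + fW 0 + eW 3 + fW 1 + a1V + om1V)
def etV : Amb 22 := (2:ℚ)⁻¹ • (eW 0 + fW 0 + eW 3 + fW 1 + a2V + om2V)

/-- the K3 lattice `Λ`, as an overlattice of `W` -/
def Lam : Submodule ℤ (Amb 22) :=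
  Submodule.span ℤ (Set.range sb ∪ {chiV, alV, beV, gaV, deV, epV, zeV, etV})

/-! ### The order-4 isometry `τ` -/

def tauEnt (k j : ℕ) : ℚ :=
  if k < 4 then (if j = k + 12 then 1 else 0)
  else if k < 16 then (if j = k - 4 then 1 else 0)
  else if k = 16 then (if j = 17 then 1 else 0)
  else if k = 17 then (if j = 16 then 1 else 0)
  else if k = 18 then (if j = 18 then -1 else 0)
  else (if j = k then 1 else 0)

def tauMat : Matrix (Fin 22) (Fin 22) ℚ := Matrix.of fun k j => tauEnt k j

/-- the isometry `τ` (as a linear endomorphism of the ambient space) -/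
def tauL : Amb 22 →ₗ[ℚ] Amb 22 := tauMat.mulVecLin

/-- the invariant lattice `Λ^τ` -/
def FixTau : Submodule ℤ (Amb 22) :=
  Lam ⊓ (LinearMap.ker (tauL - LinearMap.id)).restrictScalars ℤ

/-- the invariant lattice `Λ^{τ²}` -/
def FixTau2 : Submodule ℤ (Amb 22) :=
  Lam ⊓ (LinearMap.ker (tauL ∘ₗ tauL - LinearMap.id)).restrictScalars ℤ

/-- the coinvariant lattice `Ω₄ = (Λ^τ)^⊥ ∩ Λ` -/
def Om4 : Submodule ℤ (Amb 22) := orthoIn gramW Lam ↑FixTau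

/-- `Ω₂`, spanned by the listed eight elements -/
def Om2 : Submodule ℤ (Amb 22) :=
  Submodule.span ℤ {alV - gaV, beV - deV, eW 0 - gW 0, eW 2 - gW 2,
    fW 0 - hW 0, fW 1 - hW 1, fW 2 - hW 2, fW 3 - hW 3}

/-- `R`, the orthogonal complement of `Ω₂` in `Ω₄` -/
def Rlat : Submodule ℤ (Amb 22) := orthoIn gramW Om4 ↑Om2

/-! ### The K3 lattice in its standard integral form -/

/-- negative definite `E8` Gram matrix entries (Bourbaki numbering of the Dynkin diagram) -/
def e8ent (i j : ℕ) : ℤ :=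
  if i = j then -2
  else if (i, j) ∈ ([(0,2),(2,0),(1,3),(3,1),(2,3),(3,2),(3,4),(4,3),
      (4,5),(5,4),(5,6),(6,5),(6,7),(7,6)] : List (ℕ × ℕ)) then 1
  else 0

def e8mat : Matrix (Fin 8) (Fin 8) ℤ := Matrix.of fun i j => e8ent i.1 j.1

/-- Gram matrix of `Λ_K3 = E8² ⊕ U³` -/
def k3ent (i j : ℕ) : ℤ :=
  if i < 8 ∧ j < 8 then e8ent i j
  else if 8 ≤ i ∧ i < 16 ∧ 8 ≤ j ∧ j < 16 then e8ent (i - 8) (j - 8)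
  else if 16 ≤ i ∧ i < 22 ∧ 16 ≤ j ∧ j < 22 ∧ (i - 16) / 2 = (j - 16) / 2 then
    (if i = j then 0 else 1)
  else 0

def gramK3 : Matrix (Fin 22) (Fin 22) ℤ := Matrix.of fun i j => k3ent i.1 j.1

/-! ### The exceptional lattice `M` -/

/-- Gram matrix of `A3⁴ ⊕ A1²` -/
def gramMent (i j : ℕ) : ℚ :=
  if i < 12 ∧ j < 12 ∧ i / 3 = j / 3 then
    (if i = j then -2 else if i + 1 = j ∨ j + 1 = i then 1 else 0)
  else if i = j then -2 else 0

def gramM : Matrix (Fin 14) (Fin 14) ℚ := Matrix.of fun i j => gramMent i.1 j.1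

def mb (i : Fin 14) : Amb 14 := Pi.single i 1

/-- the glue vector `μ` -/
def muM : Amb 14 :=
  (4:ℚ)⁻¹ • ((mb 0 + (2:ℚ) • mb 1 + (3:ℚ) • mb 2) + (mb 3 + (2:ℚ) • mb 4 + (3:ℚ) • mb 5)
    + (mb 6 + (2:ℚ) • mb 7 + (3:ℚ) • mb 8) + (mb 9 + (2:ℚ) • mb 10 + (3:ℚ) • mb 11))
  + (2:ℚ)⁻¹ • (mb 12 + mb 13)

/-- the exceptional lattice `M = M_{ℤ/4ℤ}` -/
def Mlat : Submodule ℤ (Amb 14) := Submodule.span ℤ (Set.range mb ∪ {muM})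

/-! ### The Nikulin lattice `N` -/

def gramN8 : Matrix (Fin 8) (Fin 8) ℚ := Matrix.diagonal fun _ => -2

def nb (i : Fin 8) : Amb 8 := Pi.single i 1

def nuN : Amb 8 := (2:ℚ)⁻¹ • (∑ i : Fin 8, nb i)

/-- the Nikulin lattice -/
def Nlat : Submodule ℤ (Amb 8) := Submodule.span ℤ (Set.range nb ∪ {nuN})

/-! ### The ambient space for `Γ`: `Ŵ ⊕ A1⁸` (coordinates 0–13 for `Ŵ`, 14–21 Nikulin) -/

def gamEnt (i j : ℕ) : ℚ :=
  if i < 8 ∧ j < 8 then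
    (if i / 4 = j / 4 then (if i = j then -2 else if i % 4 = 2 ∨ j % 4 = 2 then 1 else 0) else 0)
  else if i = j then
    (if i < 10 then -4 else if i = 10 then -8 else if i = 11 then 8
     else if i < 14 then 4 else -2)
  else 0

def gramGam : Matrix (Fin 22) (Fin 22) ℚ := Matrix.of fun i j => gamEnt i.1 j.1

/-- the projection `π : W ⊗ ℚ → Ŵ ⊗ ℚ` (realized inside the `Γ`-ambient space) -/
def piEnt (k j : ℕ) : ℚ :=
  if k < 8 then (if j = k ∨ j = k + 8 then 1 else 0)
  else if k < 14 then (if j = k + 8 then 1 else 0)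
  else 0

def piMat : Matrix (Fin 22) (Fin 22) ℚ := Matrix.of fun k j => piEnt k.1 j.1

def piL : Amb 22 →ₗ[ℚ] Amb 22 := piMat.mulVecLin

/-- `R̂ = π(Ω₄)` -/
def Rhat : Submodule ℤ (Amb 22) := Submodule.map (piL.restrictScalars ℤ) Om4

/-- the Nikulin curves inside the `Γ`-ambient space (coordinates 14,…,21) -/
def nG (i : Fin 8) : Amb 22 := sb ⟨14 + i.1, by have := i.isLt; omega⟩

def nuG : Amb 22 := (2:ℚ)⁻¹ • (∑ i : Fin 8, nG i)

/-- the copy of the Nikulin lattice inside the `Γ`-ambient space -/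
def NlatG : Submodule ℤ (Amb 22) := Submodule.span ℤ (Set.range nG ∪ {nuG})

/-- `x₁ = (n₃+n₄+n₅+n₈+σ̂)/2` -/
def x1G : Amb 22 := (2:ℚ)⁻¹ • (nG 2 + nG 3 + nG 4 + nG 7 + sb 10)

/-- `x₂ = (n₃+n₄+(ê₁−f̂₁)+(ê₄−f̂₄))/2 + (â₁−â₂+σ̂)/4` -/
def x2G : Amb 22 :=
  (2:ℚ)⁻¹ • (nG 2 + nG 3 + (sb 0 - sb 4) + (sb 3 - sb 7)) + (4:ℚ)⁻¹ • (sb 8 - sb 9 + sb 10)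

/-- the lattice `Γ` -/
def GamLat : Submodule ℤ (Amb 22) :=
  Submodule.span ℤ ((Rhat : Set (Amb 22)) ∪ (NlatG : Set (Amb 22)) ∪ {x1G, x2G})


/-! ### further generic notions -/

/-- `Q` is an overlattice of `A ⊕ B` (inside `(A ⊕ B) ⊗ ℚ`) which is an even integral
lattice and in which both `A` and `B` are primitive. -/
def OverCond {n : ℕ} (G : Matrix (Fin n) (Fin n) ℚ) (A B Q : Submodule ℤ (Amb n)) : Prop :=
  A ⊔ B ≤ Q ∧
  Q ≤ (Submodule.span ℚ ((A ⊔ B : Submodule ℤ (Amb n)) : Set (Amb n))).restrictScalars ℤ ∧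
  IsIntegral G ↑Q ∧ IsEven G ↑Q ∧ PrimIn A Q ∧ PrimIn B Q

/-- overlattice with quotient `ℤ/2ℤ` -/
def OvIdx2 {n : ℕ} (G : Matrix (Fin n) (Fin n) ℚ) (A B Q : Submodule ℤ (Amb n)) : Prop :=
  OverCond G A B Q ∧ subIndex (A ⊔ B) Q = 2

/-- overlattice with quotient `ℤ/4ℤ` -/
def OvIdx4 {n : ℕ} (G : Matrix (Fin n) (Fin n) ℚ) (A B Q : Submodule ℤ (Amb n)) : Prop :=
  OverCond G A B Q ∧ subIndex (A ⊔ B) Q = 4 ∧ IsAddCyclic (quotBy (A ⊔ B) Q)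

/-- the lattice `S` admits a primitive embedding into `ℤ^m` with Gram matrix `H`,
and any two such embeddings are conjugate by an isometry of the target. -/
def PrimEmbUnique {n m : ℕ} (G : Matrix (Fin n) (Fin n) ℚ) (S : Submodule ℤ (Amb n))
    (H : Matrix (Fin m) (Fin m) ℤ) : Prop :=
  (∃ φ, IsPrimEmb G S H φ) ∧
    ∀ φ ψ, IsPrimEmb G S H φ → IsPrimEmb G S H ψ →
      ∃ θ : (Fin m → ℤ) ≃ₗ[ℤ] (Fin m → ℤ), IsIsomZ H θ ∧ ∀ x, θ (φ x) = ψ x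

/-- compatibility of a function on the discriminant group with the discriminant
quadratic form (this characterizes the discriminant quadratic form). -/
def qCompat {n : ℕ} (G : Matrix (Fin n) (Fin n) ℚ) (T : Set (Amb n))
    (Qf : disc G T → AddCircle (2:ℚ)) : Prop :=
  ∀ x : ↥(dualLat G T), Qf (discMk G T x) = ((bq G ↑x ↑x : ℚ) : AddCircle (2:ℚ))

/-- two classes of the discriminant group are related by an isometry of the lattice
(an isometry of the ℤ-span of `T` is encoded as an ambient isometry preserving the span
of `T` and fixing its orthogonal complement pointwise). -/
def discRel {n : ℕ} (G : Matrix (Fin n) (Fin n) ℚ) (T : Set (Amb n))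
    (a b : disc G T) : Prop :=
  ∃ φ : Amb n ≃ₗ[ℚ] Amb n,
    (∀ x y, bq G (φ x) (φ y) = bq G x y) ∧
    (φ '' (Submodule.span ℤ T : Set (Amb n)) = (Submodule.span ℤ T : Set (Amb n))) ∧
    (∀ x, (∀ s ∈ T, bq G x s = 0) → φ x = x) ∧
    ∃ u v : ↥(dualLat G T), φ ↑u = (v : Amb n) ∧ a = discMk G T u ∧ b = discMk G T v

/-- two overlattices `Q`, `Q'` of `S ⊕ K` are isomorphic: there is an isometry of
`S ⊕ K` carrying `S` to `S` and `K` to `K` whose ℚ-linear extension carries `Q` to `Q'`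
(encoded as an ambient isometry, which is precisely such an extension). -/
def isoRelQ {n : ℕ} (G : Matrix (Fin n) (Fin n) ℚ) (S K : Submodule ℤ (Amb n))
    (Q Q' : Submodule ℤ (Amb n)) : Prop :=
  ∃ φ : Amb n ≃ₗ[ℚ] Amb n,
    (∀ x y, bq G (φ x) (φ y) = bq G x y) ∧
    φ '' (S : Set (Amb n)) = (S : Set (Amb n)) ∧
    φ '' (K : Set (Amb n)) = (K : Set (Amb n)) ∧
    φ '' (Q : Set (Amb n)) = (Q' : Set (Amb n))

/-- two elements of the dual lattice of `S` are in the same orbit of the discriminant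
group under the action induced by `O(S)`. -/
def orbRelEl {n : ℕ} (G : Matrix (Fin n) (Fin n) ℚ) (S : Submodule ℤ (Amb n))
    (u v : ↥(dualLat G (S : Set (Amb n)))) : Prop :=
  ∃ φ : Amb n ≃ₗ[ℚ] Amb n,
    (∀ x y, bq G (φ x) (φ y) = bq G x y) ∧
    φ '' (S : Set (Amb n)) = (S : Set (Amb n)) ∧
    (∀ x, (∀ s ∈ (S : Set (Amb n)), bq G x s = 0) → φ x = x) ∧
    φ ↑u - ↑v ∈ S



/-! ### Explicit formulas for the form and the glue vector -/

/-- Pairings of `y` with the 14 basis vectors. -/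
lemma gramM_mulVec (y : Amb 14) : gramM *ᵥ y =
    ![-2 * y 0 + y 1, y 0 - 2 * y 1 + y 2, y 1 - 2 * y 2,
      -2 * y 3 + y 4, y 3 - 2 * y 4 + y 5, y 4 - 2 * y 5,
      -2 * y 6 + y 7, y 6 - 2 * y 7 + y 8, y 7 - 2 * y 8,
      -2 * y 9 + y 10, y 9 - 2 * y 10 + y 11, y 10 - 2 * y 11,
      -2 * y 12, -2 * y 13] := by
  ext i
  fin_cases i <;> simp [mulVec, dotProduct, Fin.sum_univ_succ, gramM, gramMent, Fin.succ] <;> ring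

lemma bqM_eq (x y : Amb 14) : bq gramM x y =
    (-2 * x 0 * y 0 - 2 * x 1 * y 1 - 2 * x 2 * y 2
        + x 0 * y 1 + x 1 * y 0 + x 1 * y 2 + x 2 * y 1)
      + (-2 * x 3 * y 3 - 2 * x 4 * y 4 - 2 * x 5 * y 5
        + x 3 * y 4 + x 4 * y 3 + x 4 * y 5 + x 5 * y 4)
      + (-2 * x 6 * y 6 - 2 * x 7 * y 7 - 2 * x 8 * y 8
        + x 6 * y 7 + x 7 * y 6 + x 7 * y 8 + x 8 * y 7)
      + (-2 * x 9 * y 9 - 2 * x 10 * y 10 - 2 * x 11 * y 11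
        + x 9 * y 10 + x 10 * y 9 + x 10 * y 11 + x 11 * y 10)
      - 2 * x 12 * y 12 - 2 * x 13 * y 13 := by
  rw [bq, gramM_mulVec]
  simp only [dotProduct, Fin.sum_univ_succ, Fin.sum_univ_zero]
  simp [Fin.succ]
  ring

lemma muM_eq : muM = ![1/4, 1/2, 3/4, 1/4, 1/2, 3/4, 1/4, 1/2, 3/4, 1/4, 1/2, 3/4, 1/2, 1/2] := by
  ext i
  fin_cases i <;> simp [muM, mb] <;> norm_num

/-! ### Vectors of `M` and of its dual in coordinates -/

lemma mem_intQ {q : ℚ} : q ∈ intQ ↔ ∃ k : ℤ, (k : ℚ) = q := by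
  simp [intQ, LinearMap.mem_range]

lemma bqM_comm (x y : Amb 14) : bq gramM x y = bq gramM y x := by
  rw [bqM_eq, bqM_eq]; ring

lemma mb_apply (i j : Fin 14) : mb i j = if j = i then 1 else 0 := by
  simp [mb, Pi.single_apply]

/-- `M` consists of the vectors `k μ + n` with `k` an integer and `n` an integral vector. -/
lemma mem_Mlat {x : Amb 14} :
    x ∈ Mlat ↔ ∃ (k : ℤ) (n : Fin 14 → ℤ), ∀ i, x i = k * muM i + n i := by
  constructor
  · intro hx
    refine Submodule.span_induction ?_ ?_ ?_ ?_ hx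
    · rintro y (⟨i, rfl⟩ | rfl)
      · refine ⟨0, Pi.single i 1, fun j => ?_⟩
        by_cases h : j = i
        · subst h; simp [mb]
        · simp [mb, h]
      · exact ⟨1, 0, fun j => by simp⟩
    · exact ⟨0, 0, fun j => by simp⟩
    · rintro y z - - ⟨k, n, h⟩ ⟨k', n', h'⟩
      refine ⟨k + k', n + n', fun j => ?_⟩
      simp only [Pi.add_apply, h, h']
      push_cast; ring
    · rintro a y - ⟨k, n, h⟩
      refine ⟨a * k, a • n, fun j => ?_⟩
      simp only [Pi.smul_apply, h, zsmul_eq_mul, smul_eq_mul]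
      push_cast; ring
  · rintro ⟨k, n, h⟩
    have hx : x = k • muM + ∑ i, n i • mb i := by
      ext j
      simp [h, Finset.sum_apply, mb_apply]
    rw [hx]
    refine Submodule.add_mem _ (Submodule.smul_mem _ _ (Submodule.subset_span (by simp)))
      (Submodule.sum_mem _ fun i _ => Submodule.smul_mem _ _ (Submodule.subset_span (by simp)))

lemma mb_mem (i : Fin 14) : mb i ∈ Mlat := Submodule.subset_span (by simp)

lemma muM_mem : muM ∈ Mlat := Submodule.subset_span (by simp)

/-- The vector whose `i`-th `A3` component is `(C i / 4)(m₁ + 2m₂ + 3m₃)` plus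
`β i m₂ + γ i m₃`, and whose `A1` components are half of `d`. For integral arguments these are
exactly the vectors of the dual of `A3⁴ ⊕ A1²`: the first coordinate of an `A3` component
determines its class modulo `A3`, so no integral multiple of `m₁` has to be added. -/
def glue (C β γ : Fin 4 → ℤ) (d : Fin 2 → ℤ) : Amb 14 :=
  ![C 0 / 4, C 0 / 2 + β 0, 3 * C 0 / 4 + γ 0, C 1 / 4, C 1 / 2 + β 1, 3 * C 1 / 4 + γ 1,
    C 2 / 4, C 2 / 2 + β 2, 3 * C 2 / 4 + γ 2, C 3 / 4, C 3 / 2 + β 3, 3 * C 3 / 4 + γ 3,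
    d 0 / 2, d 1 / 2]

lemma mem_dual_of_pair {x : Amb 14} (h : ∀ y ∈ Mlat, ∃ k : ℤ, (k : ℚ) = bq gramM x y) :
    x ∈ dualLat gramM (Mlat : Set (Amb 14)) := by
  refine Submodule.mem_inf.2 ⟨?_, ?_⟩
  · have hx : x = ∑ i, x i • mb i := by
      ext j
      simp [Finset.sum_apply, mb_apply]
    rw [Submodule.restrictScalars_mem, hx]
    exact Submodule.sum_mem _ fun i _ => Submodule.smul_mem _ _ (Submodule.subset_span (mb_mem i))
  · simp only [Submodule.mem_iInf, Submodule.mem_comap]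
    intro y hy
    exact mem_intQ.2 (h y hy)

lemma pair_of_mem_dual {x : Amb 14} (h : x ∈ dualLat gramM (Mlat : Set (Amb 14))) {y : Amb 14}
    (hy : y ∈ Mlat) : ∃ k : ℤ, (k : ℚ) = bq gramM x y := by
  have h2 := (Submodule.mem_inf.1 h).2
  simp only [Submodule.mem_iInf, Submodule.mem_comap] at h2
  exact mem_intQ.1 (h2 y hy)

/-- Membership in the dual can be tested on the generators of `M`. -/
lemma pair_of_gens {x : Amb 14} (hb : ∀ i, ∃ k : ℤ, (k : ℚ) = bq gramM x (mb i))
    (hμ : ∃ k : ℤ, (k : ℚ) = bq gramM x muM) : x ∈ dualLat gramM (Mlat : Set (Amb 14)) := by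
  refine mem_dual_of_pair fun y hy => ?_
  have hle : Mlat ≤ Submodule.comap (bqL gramM x) intQ := by
    refine Submodule.span_le.2 ?_
    rintro y (⟨i, rfl⟩ | rfl)
    · exact mem_intQ.2 (by simpa [bqL, bqM_comm] using hb i)
    · exact mem_intQ.2 (by simpa [bqL, bqM_comm] using hμ)
  have := mem_intQ.1 (hle hy)
  simpa [bqL, bqM_comm] using this

/-- The dual of `M` is cut out of the dual of `A3⁴ ⊕ A1²` by integrality of the pairing with
`μ`, which is the congruence modulo 4 below. -/
lemma mem_dual {x : Amb 14} : x ∈ dualLat gramM (Mlat : Set (Amb 14)) ↔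
    ∃ (C β γ : Fin 4 → ℤ) (d : Fin 2 → ℤ) (t : ℤ),
      3 * (C 0 + C 1 + C 2 + C 3) + 2 * (d 0 + d 1) = 4 * t ∧ x = glue C β γ d := by
  constructor
  · intro hx
    have key := fun i => pair_of_mem_dual hx (mb_mem i)
    choose p hp using key
    obtain ⟨s, hs⟩ := pair_of_mem_dual hx muM_mem
    have h0 := hp 0
    have h1 := hp 1
    have h2 := hp 2
    have h3 := hp 3
    have h4 := hp 4
    have h5 := hp 5
    have h6 := hp 6
    have h7 := hp 7
    have h8 := hp 8
    have h9 := hp 9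
    have h10 := hp 10
    have h11 := hp 11
    have h12 := hp 12
    have h13 := hp 13
    rw [bqM_eq] at h0 h1 h2 h3 h4 h5 h6 h7 h8 h9 h10 h11 h12 h13
    simp [mb_apply] at h0 h1 h2 h3 h4 h5 h6 h7 h8 h9 h10 h11 h12 h13
    rw [bqM_eq, muM_eq] at hs
    simp at hs
    have e : x = glue
        ![-(3 * p 0 + 2 * p 1 + p 2), -(3 * p 3 + 2 * p 4 + p 5),
          -(3 * p 6 + 2 * p 7 + p 8), -(3 * p 9 + 2 * p 10 + p 11)]
        ![p 0, p 3, p 6, p 9] ![2 * p 0 + p 1, 2 * p 3 + p 4, 2 * p 6 + p 7, 2 * p 9 + p 10]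
        ![-p 12, -p 13] := by
      ext i
      fin_cases i <;> simp [glue] <;> linarith
    refine ⟨_, _, _, _, -(s + (2 * p 0 + p 1) + (2 * p 3 + p 4) + (2 * p 6 + p 7)
      + (2 * p 9 + p 10)), ?_, e⟩
    simp only [Matrix.cons_val]
    qify
    linarith
  · rintro ⟨C, β, γ, d, t, ht, rfl⟩
    have htq : (3 * (C 0 + C 1 + C 2 + C 3) + 2 * (d 0 + d 1) : ℚ) = 4 * t := by exact_mod_cast ht
    refine pair_of_gens (fun i => ?_) ⟨-t - (γ 0 + γ 1 + γ 2 + γ 3), ?_⟩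
    · refine ⟨![β 0, γ 0 - 2 * β 0, β 0 - 2 * γ 0 - C 0, β 1, γ 1 - 2 * β 1, β 1 - 2 * γ 1 - C 1,
        β 2, γ 2 - 2 * β 2, β 2 - 2 * γ 2 - C 2, β 3, γ 3 - 2 * β 3, β 3 - 2 * γ 3 - C 3,
        -d 0, -d 1] i, ?_⟩
      rw [bqM_eq]
      fin_cases i <;> simp [glue, mb_apply] <;> ring
    · rw [bqM_eq, muM_eq]
      simp [glue]
      linarith

lemma glue_add (C β γ C' β' γ' : Fin 4 → ℤ) (d d' : Fin 2 → ℤ) :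
    glue C β γ d + glue C' β' γ' d' = glue (C + C') (β + β') (γ + γ') (d + d') := by
  ext i
  fin_cases i <;> simp [glue] <;> ring

lemma Mlat_le_dual : Mlat ≤ dualLat gramM (Mlat : Set (Amb 14)) := by
  intro x hx
  obtain ⟨k, n, h⟩ := mem_Mlat.1 hx
  refine mem_dual.2 ⟨![k + 4 * n 0, k + 4 * n 3, k + 4 * n 6, k + 4 * n 9],
    ![n 1 - 2 * n 0, n 4 - 2 * n 3, n 7 - 2 * n 6, n 10 - 2 * n 9],
    ![n 2 - 3 * n 0, n 5 - 3 * n 3, n 8 - 3 * n 6, n 11 - 3 * n 9],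
    ![k + 2 * n 12, k + 2 * n 13],
    4 * k + 3 * (n 0 + n 3 + n 6 + n 9) + (n 12 + n 13), ?_, ?_⟩
  · simp only [Matrix.cons_val]
    ring
  · ext i
    rw [h, muM_eq]
    fin_cases i <;> simp [glue] <;> ring

lemma Mlat_even {x : Amb 14} (hx : x ∈ Mlat) : ∃ k : ℤ, bq gramM x x = 2 * k := by
  obtain ⟨k, n, h⟩ := mem_Mlat.1 hx
  refine ⟨-2 * k ^ 2 - k * (n 2 + n 5 + n 8 + n 11) - k * (n 12 + n 13)
    - n 0 ^ 2 - n 1 ^ 2 - n 2 ^ 2 + n 0 * n 1 + n 1 * n 2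
    - n 3 ^ 2 - n 4 ^ 2 - n 5 ^ 2 + n 3 * n 4 + n 4 * n 5
    - n 6 ^ 2 - n 7 ^ 2 - n 8 ^ 2 + n 6 * n 7 + n 7 * n 8
    - n 9 ^ 2 - n 10 ^ 2 - n 11 ^ 2 + n 9 * n 10 + n 10 * n 11 - n 12 ^ 2 - n 13 ^ 2, ?_⟩
  rw [bqM_eq]
  simp only [h, muM_eq, Matrix.cons_val]
  push_cast
  ring

/-! ### The discriminant group as `(ℤ/4)² × (ℤ/2)²` -/

/-- The finite model of the discriminant group `A_M`. -/
abbrev DM := ZMod 4 × ZMod 4 × ZMod 2 × ZMod 2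

/-- The class of a dual vector. Its classes `C₀, …, C₃ ∈ ℤ/4` and `d₀, d₁ ∈ ℤ/2` in the
discriminant group of `A3⁴ ⊕ A1²` are all shifted by one under adding `μ`, so the differences
with `C₀` are invariants modulo `M`; `C₃ - C₀` is omitted because the congruence defining the
dual determines it. On dual vectors the floors are taken of integers. -/
def cls (x : Amb 14) : DM :=
  (((⌊4 * x 3⌋ - ⌊4 * x 0⌋ : ℤ) : ZMod 4), ((⌊4 * x 6⌋ - ⌊4 * x 0⌋ : ℤ) : ZMod 4),
    ((⌊2 * x 12⌋ - ⌊4 * x 0⌋ : ℤ) : ZMod 2), ((⌊2 * x 13⌋ - ⌊4 * x 0⌋ : ℤ) : ZMod 2))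

lemma cls_glue (C β γ : Fin 4 → ℤ) (d : Fin 2 → ℤ) : cls (glue C β γ d) =
    (((C 1 - C 0 : ℤ) : ZMod 4), ((C 2 - C 0 : ℤ) : ZMod 4),
      ((d 0 - C 0 : ℤ) : ZMod 2), ((d 1 - C 0 : ℤ) : ZMod 2)) := by
  have h4 : ∀ z : ℤ, ⌊(4 : ℚ) * (z / 4)⌋ = z := fun z => by
    rw [mul_div_cancel₀ _ (by norm_num)]; exact Int.floor_intCast z
  have h2 : ∀ z : ℤ, ⌊(2 : ℚ) * (z / 2)⌋ = z := fun z => by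
    rw [mul_div_cancel₀ _ (by norm_num)]; exact Int.floor_intCast z
  simp only [cls, glue, Matrix.cons_val, h4, h2]

/-- `cls` as a homomorphism from the dual of `M`. -/
def clsHom : ↥(dualLat gramM (Mlat : Set (Amb 14))) →+ DM where
  toFun x := cls x
  map_zero' := by simp [cls]
  map_add' x y := by
    obtain ⟨C, β, γ, d, t, -, hx⟩ := mem_dual.1 x.2
    obtain ⟨C', β', γ', d', t', -, hy⟩ := mem_dual.1 y.2
    rw [Submodule.coe_add, hx, hy, glue_add]
    simp only [cls_glue, Pi.add_apply, Prod.mk_add_mk]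
    push_cast
    refine Prod.ext ?_ (Prod.ext ?_ (Prod.ext ?_ ?_)) <;> simp only <;> ring

lemma clsHom_apply (x) : clsHom x = cls x := rfl

/-- The kernel of `cls` on the dual of `M` is `M` itself. -/
lemma cls_eq_zero {x : Amb 14} (hx : x ∈ dualLat gramM (Mlat : Set (Amb 14))) :
    cls x = 0 ↔ x ∈ Mlat := by
  constructor
  · intro h
    obtain ⟨C, β, γ, d, t, ht, rfl⟩ := mem_dual.1 hx
    rw [cls_glue] at h
    simp only [Prod.ext_iff, Prod.fst_zero, Prod.snd_zero, ZMod.intCast_zmod_eq_zero_iff_dvd] at h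
    obtain ⟨⟨a, ha⟩, ⟨b, hb⟩, ⟨p, hp⟩, ⟨q, hq⟩⟩ := h
    push_cast at ha hb hp hq
    obtain ⟨e, he⟩ : ∃ e, C 3 = C 0 + 4 * e := ⟨(C 3 - C 0) / 4, by omega⟩
    obtain ha : C 1 = C 0 + 4 * a := by omega
    obtain hb : C 2 = C 0 + 4 * b := by omega
    obtain hp : d 0 = C 0 + 2 * p := by omega
    obtain hq : d 1 = C 0 + 2 * q := by omega
    refine mem_Mlat.2 ⟨C 0, ![0, β 0, γ 0, a, 2 * a + β 1, 3 * a + γ 1,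
      b, 2 * b + β 2, 3 * b + γ 2, e, 2 * e + β 3, 3 * e + γ 3, p, q], fun i => ?_⟩
    rw [muM_eq]
    fin_cases i <;> simp [glue, he, ha, hb, hp, hq] <;> ring
  · intro h
    obtain ⟨k, n, h⟩ := mem_Mlat.1 h
    have h4 : ∀ z : ℤ, ⌊(4 : ℚ) * (k * (1 / 4) + z)⌋ = k + 4 * z := fun z => by
      rw [show (4 : ℚ) * (k * (1 / 4) + z) = ((k + 4 * z : ℤ) : ℚ) by push_cast; ring]
      exact Int.floor_intCast _
    have h2 : ∀ z : ℤ, ⌊(2 : ℚ) * (k * (1 / 2) + z)⌋ = k + 2 * z := fun z => by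
      rw [show (2 : ℚ) * (k * (1 / 2) + z) = ((k + 2 * z : ℤ) : ℚ) by push_cast; ring]
      exact Int.floor_intCast _
    simp only [cls, h, muM_eq, Matrix.cons_val, h4, h2]
    exact Prod.ext ((ZMod.intCast_zmod_eq_zero_iff_dvd _ 4).2 ⟨n 3 - n 0, by push_cast; ring⟩)
      (Prod.ext ((ZMod.intCast_zmod_eq_zero_iff_dvd _ 4).2 ⟨n 6 - n 0, by push_cast; ring⟩)
      (Prod.ext ((ZMod.intCast_zmod_eq_zero_iff_dvd _ 2).2 ⟨n 12 - 2 * n 0, by push_cast; ring⟩)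
      ((ZMod.intCast_zmod_eq_zero_iff_dvd _ 2).2 ⟨n 13 - 2 * n 0, by push_cast; ring⟩)))

/-- A dual vector of class `e`, normalised by `C₀ = 0`; its entry `C₃` is then forced modulo 4
by integrality of the pairing with `μ`. -/
def repD (e : DM) : Amb 14 :=
  glue ![0, e.1.val, e.2.1.val,
      -(e.1.val + e.2.1.val : ℤ) - 2 * (e.2.2.1.val + e.2.2.2.val)] 0 0
    ![e.2.2.1.val, e.2.2.2.val]

lemma repD_mem (e : DM) : repD e ∈ dualLat gramM (Mlat : Set (Amb 14)) := by
  refine mem_dual.2 ⟨_, _, _, _, -(e.2.2.1.val + e.2.2.2.val : ℤ), ?_, rfl⟩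
  simp only [Matrix.cons_val]
  ring

lemma cls_repD (e : DM) : cls (repD e) = e := by
  rw [repD, cls_glue]
  simp

/-- Minus four times the square of `repD e`. Modulo 8 it encodes the value of the discriminant
form at the class `e`. -/
def normD (e : DM) : ℤ :=
  3 * ((e.1.val : ℤ) ^ 2 + (e.2.1.val : ℤ) ^ 2
    + ((e.1.val + e.2.1.val : ℤ) + 2 * (e.2.2.1.val + e.2.2.2.val)) ^ 2)
    + 2 * ((e.2.2.1.val : ℤ) ^ 2 + (e.2.2.2.val : ℤ) ^ 2)

lemma bq_repD (e : DM) : bq gramM (repD e) (repD e) = -(normD e : ℚ) / 4 := by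
  rw [bqM_eq]
  simp [repD, glue, normD]
  ring

lemma clsHom_surjective : Function.Surjective clsHom := fun e =>
  ⟨⟨repD e, repD_mem e⟩, cls_repD e⟩

/-- The isomorphism of `A_M` with its finite model induced by `cls`. -/
def discEquiv : disc gramM (Mlat : Set (Amb 14)) ≃+ DM :=
  ((Submodule.quotEquivOfEq _ (LinearMap.ker clsHom.toIntLinearMap) (by
    ext x
    have hs : Submodule.span ℤ (Mlat : Set (Amb 14)) = Mlat := Submodule.span_eq _
    rw [Submodule.mem_comap, hs, LinearMap.mem_ker]
    exact (cls_eq_zero x.2).symm)).trans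
    (clsHom.toIntLinearMap.quotKerEquivOfSurjective clsHom_surjective)).toAddEquiv

lemma discEquiv_mk (x) : discEquiv (discMk gramM Mlat x) = cls x := rfl

/-- The discriminant quadratic form, read off from the chosen representatives; that it is the
right function on all representatives is `qM_compat`. -/
def qM (a : disc gramM (Mlat : Set (Amb 14))) : AddCircle (2 : ℚ) :=
  ((-(normD (discEquiv a) : ℚ) / 4 : ℚ) : AddCircle (2 : ℚ))

lemma qM_compat : qCompat gramM (Mlat : Set (Amb 14)) qM := by
  intro x
  have hm : (x : Amb 14) - repD (cls x) ∈ Mlat := by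
    refine (cls_eq_zero (sub_mem x.2 (repD_mem _))).1 ?_
    have := map_sub clsHom x ⟨_, repD_mem (cls x)⟩
    simp only [clsHom_apply, AddSubgroupClass.coe_sub, cls_repD, sub_self] at this
    exact this
  obtain ⟨k, hk⟩ := Mlat_even hm
  obtain ⟨l, hl⟩ := pair_of_mem_dual (repD_mem (cls x)) hm
  rw [qM, discEquiv_mk, ← bq_repD, eq_comm, ← sub_eq_zero, ← AddCircle.coe_sub,
    AddCircle.coe_eq_zero_iff]
  refine ⟨k + l, ?_⟩
  rw [bqM_eq] at hk hl ⊢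
  rw [bqM_eq]
  simp only [Pi.sub_apply] at hk hl
  simp only [zsmul_eq_mul]
  push_cast
  linear_combination -hk + 2 * hl

/-- The form takes the value `h / 2` at `e` exactly when `normD e + 2h` vanishes modulo 8. -/
lemma coe_eq_coe_iff (e : DM) (h : ℤ) :
    ((-(normD e : ℚ) / 4 : ℚ) : AddCircle (2 : ℚ)) = ((h / 2 : ℚ) : AddCircle (2 : ℚ)) ↔
      (normD e + 2 * h) % 8 = 0 := by
  rw [← sub_eq_zero, ← AddCircle.coe_sub, AddCircle.coe_eq_zero_iff]
  constructor
  · rintro ⟨n, hn⟩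
    have : normD e + 2 * h = 8 * (-n) := by
      rw [zsmul_eq_mul] at hn
      qify
      linarith
    omega
  · intro h8
    refine ⟨-((normD e + 2 * h) / 8), ?_⟩
    obtain ⟨m, hm⟩ := Int.dvd_of_emod_eq_zero h8
    rw [hm, Int.mul_ediv_cancel_left _ (by norm_num)]
    have : (normD e + 2 * h : ℚ) = 8 * m := by exact_mod_cast hm
    rw [zsmul_eq_mul]
    push_cast
    linarith

/-! ### Isometries of `M` and the orbit relation -/

/-- The ambient isometries preserving `M`, that is, the elements of `O(M)`: the span of `M` is the
whole ambient space. -/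
structure IsoM (φ : Amb 14 ≃ₗ[ℚ] Amb 14) : Prop where
  form : ∀ x y, bq gramM (φ x) (φ y) = bq gramM x y
  image : φ '' (Mlat : Set (Amb 14)) = (Mlat : Set (Amb 14))

/-- `M` has full rank and its form is nondegenerate, so the condition in `discRel` on the
orthogonal complement is void. -/
lemma eq_zero_of_orth {x : Amb 14} (h : ∀ s ∈ (Mlat : Set (Amb 14)), bq gramM x s = 0) :
    x = 0 := by
  have h0 := h _ (mb_mem 0)
  have h1 := h _ (mb_mem 1)
  have h2 := h _ (mb_mem 2)
  have h3 := h _ (mb_mem 3)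
  have h4 := h _ (mb_mem 4)
  have h5 := h _ (mb_mem 5)
  have h6 := h _ (mb_mem 6)
  have h7 := h _ (mb_mem 7)
  have h8 := h _ (mb_mem 8)
  have h9 := h _ (mb_mem 9)
  have h10 := h _ (mb_mem 10)
  have h11 := h _ (mb_mem 11)
  have h12 := h _ (mb_mem 12)
  have h13 := h _ (mb_mem 13)
  rw [bqM_eq] at h0 h1 h2 h3 h4 h5 h6 h7 h8 h9 h10 h11 h12 h13
  simp [mb_apply] at h0 h1 h2 h3 h4 h5 h6 h7 h8 h9 h10 h11 h12 h13
  ext i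
  fin_cases i <;> simp <;> linarith

lemma discMk_eq_iff {u v : ↥(dualLat gramM (Mlat : Set (Amb 14)))} :
    discMk gramM Mlat u = discMk gramM Mlat v ↔ (u - v : Amb 14) ∈ Mlat := by
  have hs : Submodule.span ℤ (Mlat : Set (Amb 14)) = Mlat := Submodule.span_eq _
  rw [discMk, discMk, Submodule.Quotient.eq, Submodule.mem_comap, hs]
  rfl

namespace IsoM

variable {φ ψ : Amb 14 ≃ₗ[ℚ] Amb 14}

lemma symm (h : IsoM φ) : IsoM φ.symm where
  form x y := by rw [← h.form, φ.apply_symm_apply, φ.apply_symm_apply]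
  image := by
    have := h.image
    conv_lhs => rw [← this]
    rw [← Set.image_comp]
    simp

lemma trans (h : IsoM φ) (h' : IsoM ψ) : IsoM (φ.trans ψ) where
  form x y := by rw [LinearEquiv.trans_apply, LinearEquiv.trans_apply, h'.form, h.form]
  image := by
    rw [show ⇑(φ.trans ψ) = ψ ∘ φ from rfl, Set.image_comp, h.image, h'.image]

lemma map_mem (h : IsoM φ) {x : Amb 14} (hx : x ∈ Mlat) : φ x ∈ Mlat := by
  have : φ x ∈ φ '' (Mlat : Set (Amb 14)) := ⟨x, hx, rfl⟩
  rwa [h.image] at this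

lemma map_dual (h : IsoM φ) {x : Amb 14} (hx : x ∈ dualLat gramM (Mlat : Set (Amb 14))) :
    φ x ∈ dualLat gramM (Mlat : Set (Amb 14)) := by
  refine mem_dual_of_pair fun y hy => ?_
  obtain ⟨k, hk⟩ := pair_of_mem_dual hx (h.symm.map_mem hy)
  exact ⟨k, by rw [hk, ← h.form, φ.apply_symm_apply]⟩

lemma discRel_mk (h : IsoM φ) {u v : ↥(dualLat gramM (Mlat : Set (Amb 14)))}
    (huv : φ u = v) : discRel gramM Mlat (discMk gramM Mlat u) (discMk gramM Mlat v) := by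
  have hs : Submodule.span ℤ (Mlat : Set (Amb 14)) = Mlat := Submodule.span_eq _
  refine ⟨φ, h.form, by rw [hs, h.image], fun x hx => ?_, u, v, huv, rfl, rfl⟩
  rw [eq_zero_of_orth hx, map_zero]

end IsoM

lemma discRel_iff {a b : disc gramM (Mlat : Set (Amb 14))} :
    discRel gramM Mlat a b ↔ ∃ φ, IsoM φ ∧ ∃ u v : ↥(dualLat gramM (Mlat : Set (Amb 14))),
      φ u = v ∧ a = discMk gramM Mlat u ∧ b = discMk gramM Mlat v := by
  constructor
  · rintro ⟨φ, h1, h2, -, h⟩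
    rw [Submodule.span_eq] at h2
    exact ⟨φ, ⟨h1, h2⟩, h⟩
  · rintro ⟨φ, h, u, v, huv, rfl, rfl⟩
    exact h.discRel_mk huv

lemma discRel_symm {a b : disc gramM (Mlat : Set (Amb 14))} (h : discRel gramM Mlat a b) :
    discRel gramM Mlat b a := by
  obtain ⟨φ, hφ, u, v, huv, rfl, rfl⟩ := discRel_iff.1 h
  exact hφ.symm.discRel_mk (by rw [← huv, φ.symm_apply_apply])

lemma discRel_trans {a b c : disc gramM (Mlat : Set (Amb 14))} (h : discRel gramM Mlat a b)
    (h' : discRel gramM Mlat b c) : discRel gramM Mlat a c := by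
  obtain ⟨φ, hφ, u, v, huv, rfl, rfl⟩ := discRel_iff.1 h
  obtain ⟨ψ, hψ, v', w, hvw, hv, rfl⟩ := discRel_iff.1 h'
  have key := (hφ.trans hψ).discRel_mk (u := u) (v := ⟨_, (hφ.trans hψ).map_dual u.2⟩) rfl
  convert key using 1
  rw [discMk_eq_iff]
  show (w : Amb 14) - ψ (φ u) ∈ Mlat
  rw [huv, ← hvw, ← map_sub]
  exact hψ.map_mem (discMk_eq_iff.1 hv.symm)

lemma mk_repD (e : DM) : discMk gramM Mlat ⟨repD e, repD_mem e⟩ = discEquiv.symm e := by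
  rw [AddEquiv.eq_symm_apply, discEquiv_mk, cls_repD]

/-- The action of an isometry on the finite model is computed on the representatives `repD`. -/
lemma discRel_cls {φ : Amb 14 ≃ₗ[ℚ] Amb 14} (h : IsoM φ) (e : DM) :
    discRel gramM Mlat (discEquiv.symm e) (discEquiv.symm (cls (φ (repD e)))) := by
  have key := h.discRel_mk (u := ⟨repD e, repD_mem e⟩) (v := ⟨_, h.map_dual (repD_mem e)⟩) rfl
  rw [mk_repD] at key
  convert key using 1
  rw [AddEquiv.symm_apply_eq, discEquiv_mk]

/-! ### Isometries permuting the components, and their action -/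

/-- The linear automorphism permuting the coordinates by the involution `π`. -/
def permEquiv (π : Fin 14 → Fin 14) (hπ : ∀ i, π (π i) = i) : Amb 14 ≃ₗ[ℚ] Amb 14 :=
  LinearEquiv.ofInvolutive (LinearMap.funLeft ℚ ℚ π) fun x => by
    ext i
    simp [LinearMap.funLeft_apply, hπ]

lemma permEquiv_apply (π : Fin 14 → Fin 14) (hπ : ∀ i, π (π i) = i) (x : Amb 14) (i : Fin 14) :
    permEquiv π hπ x i = x (π i) := rfl

lemma permEquiv_isoM (π : Fin 14 → Fin 14) (hπ : ∀ i, π (π i) = i)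
    (hform : ∀ x y, bq gramM (permEquiv π hπ x) (permEquiv π hπ y) = bq gramM x y)
    (hμ : ∀ i, muM (π i) = muM i) : IsoM (permEquiv π hπ) where
  form := hform
  image := by
    have hm : ∀ x ∈ Mlat, permEquiv π hπ x ∈ Mlat := fun x hx => by
      obtain ⟨k, n, h⟩ := mem_Mlat.1 hx
      exact mem_Mlat.2 ⟨k, n ∘ π, fun i => by simp [permEquiv_apply, h, hμ]⟩
    refine Set.Subset.antisymm ?_ fun x hx => ⟨permEquiv π hπ x, hm x hx, ?_⟩
    · rintro _ ⟨x, hx, rfl⟩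
      exact hm x hx
    · ext i
      simp [permEquiv_apply, hπ]

/-- Exchange of the first two copies of `A3`. -/
def swapA : Fin 14 → Fin 14 := ![3, 4, 5, 0, 1, 2, 6, 7, 8, 9, 10, 11, 12, 13]
/-- Exchange of the second and third copies of `A3`. -/
def swapB : Fin 14 → Fin 14 := ![0, 1, 2, 6, 7, 8, 3, 4, 5, 9, 10, 11, 12, 13]
/-- Exchange of the last two copies of `A3`. -/
def swapC : Fin 14 → Fin 14 := ![0, 1, 2, 3, 4, 5, 9, 10, 11, 6, 7, 8, 12, 13]
/-- Exchange of the two copies of `A1`. -/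
def swapE : Fin 14 → Fin 14 := ![0, 1, 2, 3, 4, 5, 6, 7, 8, 9, 10, 11, 13, 12]

lemma isoM_swapA : IsoM (permEquiv swapA (by decide)) := by
  refine permEquiv_isoM _ _ (fun x y => ?_) fun i => ?_
  · rw [bqM_eq, bqM_eq]
    simp only [permEquiv_apply, swapA, Matrix.cons_val]
    ring
  · rw [muM_eq]
    fin_cases i <;> simp [swapA]

lemma isoM_swapB : IsoM (permEquiv swapB (by decide)) := by
  refine permEquiv_isoM _ _ (fun x y => ?_) fun i => ?_
  · rw [bqM_eq, bqM_eq]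
    simp only [permEquiv_apply, swapB, Matrix.cons_val]
    ring
  · rw [muM_eq]
    fin_cases i <;> simp [swapB]

lemma isoM_swapC : IsoM (permEquiv swapC (by decide)) := by
  refine permEquiv_isoM _ _ (fun x y => ?_) fun i => ?_
  · rw [bqM_eq, bqM_eq]
    simp only [permEquiv_apply, swapC, Matrix.cons_val]
    ring
  · rw [muM_eq]
    fin_cases i <;> simp [swapC]

lemma isoM_swapE : IsoM (permEquiv swapE (by decide)) := by
  refine permEquiv_isoM _ _ (fun x y => ?_) fun i => ?_
  · rw [bqM_eq, bqM_eq]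
    simp only [permEquiv_apply, swapE, Matrix.cons_val]
    ring
  · rw [muM_eq]
    fin_cases i <;> simp [swapE]

lemma isoM_neg : IsoM (LinearEquiv.neg ℚ) where
  form x y := by
    rw [bqM_eq, bqM_eq]
    simp
  image := by
    ext x
    simp

/-- The action on the finite model of the exchanges `swapA`, `swapB`, `swapC`, `swapE` and of
`-1`, in this order. Exchanging the first two copies of `A3` changes the reference class `C₀`, and
exchanging the last two copies brings in the omitted difference `C₃ - C₀`. -/
def actD : Fin 5 → DM → DM
  | 0, e => (-e.1, e.2.1 - e.1, e.2.2.1 - (e.1.val : ZMod 2), e.2.2.2 - (e.1.val : ZMod 2))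
  | 1, e => (e.2.1, e.1, e.2.2)
  | 2, e => (e.1, -(e.1 + e.2.1) - 2 * ((e.2.2.1.val : ZMod 4) + (e.2.2.2.val : ZMod 4)), e.2.2)
  | 3, e => (e.1, e.2.1, e.2.2.2, e.2.2.1)
  | 4, e => -e

lemma discRel_actD (i : Fin 5) (e : DM) :
    discRel gramM Mlat (discEquiv.symm e) (discEquiv.symm (actD i e)) := by
  fin_cases i
  · convert discRel_cls isoM_swapA e using 2
    have : permEquiv swapA (by decide) (repD e) = glue ![e.1.val, 0, e.2.1.val,
      -(e.1.val + e.2.1.val : ℤ) - 2 * (e.2.2.1.val + e.2.2.2.val)] 0 0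
        ![e.2.2.1.val, e.2.2.2.val] := by
      ext i
      fin_cases i <;> simp [permEquiv_apply, swapA, repD, glue]
    rw [this, cls_glue]
    simp [actD]
  · convert discRel_cls isoM_swapB e using 2
    have : permEquiv swapB (by decide) (repD e) = glue ![0, e.2.1.val, e.1.val,
      -(e.1.val + e.2.1.val : ℤ) - 2 * (e.2.2.1.val + e.2.2.2.val)] 0 0
        ![e.2.2.1.val, e.2.2.2.val] := by
      ext i
      fin_cases i <;> simp [permEquiv_apply, swapB, repD, glue]
    rw [this, cls_glue]
    simp [actD]
  · convert discRel_cls isoM_swapC e using 2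
    have : permEquiv swapC (by decide) (repD e) = glue ![0, e.1.val,
      -(e.1.val + e.2.1.val : ℤ) - 2 * (e.2.2.1.val + e.2.2.2.val), e.2.1.val] 0 0
        ![e.2.2.1.val, e.2.2.2.val] := by
      ext i
      fin_cases i <;> simp [permEquiv_apply, swapC, repD, glue]
    rw [this, cls_glue]
    simp [actD]
  · convert discRel_cls isoM_swapE e using 2
    have : permEquiv swapE (by decide) (repD e) = glue ![0, e.1.val, e.2.1.val,
      -(e.1.val + e.2.1.val : ℤ) - 2 * (e.2.2.1.val + e.2.2.2.val)] 0 0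
        ![e.2.2.2.val, e.2.2.1.val] := by
      ext i
      fin_cases i <;> simp [permEquiv_apply, swapE, repD, glue]
    rw [this, cls_glue]
    simp [actD]
  · convert discRel_cls isoM_neg e using 2
    have := map_neg clsHom ⟨repD e, repD_mem e⟩
    simp only [clsHom_apply, cls_repD] at this
    exact this.symm

lemma discRel_foldr (w : List (Fin 5)) (e : DM) :
    discRel gramM Mlat (discEquiv.symm e) (discEquiv.symm (w.foldr actD e)) := by
  induction w with
  | nil =>
    have := discRel_actD 4 e
    exact discRel_trans this (discRel_symm this)
  | cons i w ih => exact discRel_trans ih (discRel_actD i _)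

/-! ### Orbits in the finite group -/

/-- Words in the five generators representing all elements of `S₄ × S₂ × {±1}`; the first three
factors are coset representatives along `S₂ ⊂ S₃ ⊂ S₄`. -/
def words : List (List (Fin 5)) :=
  (([[], [0]] : List (List (Fin 5))).flatMap fun a =>
    ([[], [1], [1, 0]] : List (List (Fin 5))).flatMap fun b =>
    ([[], [2], [2, 1], [2, 1, 0]] : List (List (Fin 5))).flatMap fun c =>
    ([[], [3]] : List (List (Fin 5))).flatMap fun s =>
    ([[], [4]] : List (List (Fin 5))).map fun t => a ++ b ++ c ++ s ++ t)

/-- A base point for each set of elements of given order (2 if `two` holds, 4 otherwise) and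
given value `n` of `normD` modulo 8. For order 2 and `n = 4` it lies in the orbit of size 3.
Values that do not occur get an arbitrary base point. -/
def baseD (two : Bool) (n : ℤ) : DM :=
  if two then (if n = 0 then (0, 2, 0, 0) else if n = 6 then (0, 0, 0, 1) else (0, 2, 1, 1))
  else if n = 0 then (0, 1, 0, 1) else if n = 2 then (0, 1, 1, 1)
    else if n = 4 then (1, 2, 0, 1) else (0, 1, 0, 0)

lemma orbits_two : ∀ e : DM, (e ≠ 0 ∧ e + e = 0 ∧ e ≠ (0, 0, 1, 1)) →
    ∃ w ∈ words, w.foldr actD (baseD true (normD e % 8)) = e := by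
  decide +kernel

lemma orbits_four : ∀ e : DM, e + e ≠ 0 →
    ∃ w ∈ words, w.foldr actD (baseD false (normD e % 8)) = e := by
  decide +kernel

lemma discRel_of_base {b e e' : DM} (h : ∃ w ∈ words, w.foldr actD b = e)
    (h' : ∃ w ∈ words, w.foldr actD b = e') :
    discRel gramM Mlat (discEquiv.symm e) (discEquiv.symm e') := by
  obtain ⟨w, -, rfl⟩ := h
  obtain ⟨w', -, rfl⟩ := h'
  exact discRel_trans (discRel_symm (discRel_foldr w b)) (discRel_foldr w' b)

lemma addOrderOf_two (e : DM) : addOrderOf e = 2 ↔ e ≠ 0 ∧ e + e = 0 := by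
  rw [addOrderOf_eq_prime_iff, two_nsmul]
  tauto

lemma addOrderOf_four (e : DM) : addOrderOf e = 4 ↔ e + e ≠ 0 := by
  constructor
  · intro h h2
    have := addOrderOf_dvd_of_nsmul_eq_zero (x := e) (n := 2) (by rw [two_nsmul, h2])
    rw [h] at this
    omega
  · intro h
    refine addOrderOf_eq_prime_pow (p := 2) (n := 1) (by rwa [pow_one, two_nsmul]) ?_
    revert e
    decide +kernel

lemma qM_eq_iff (a : disc gramM (Mlat : Set (Amb 14))) (h : ℤ) {q : ℚ} (hq : q = h / 2) :
    qM a = (q : AddCircle (2 : ℚ)) ↔ (normD (discEquiv a) + 2 * h) % 8 = 0 := by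
  rw [hq]
  exact coe_eq_coe_iff _ _

lemma card_two (h : ℤ) {q : ℚ} (hq : q = h / 2) :
    Nat.card {a : disc gramM (Mlat : Set (Amb 14)) |
        addOrderOf a = 2 ∧ qM a = (q : AddCircle (2 : ℚ))} =
      Fintype.card {e : DM // (e ≠ 0 ∧ e + e = 0) ∧ (normD e + 2 * h) % 8 = 0} := by
  rw [← Nat.card_eq_fintype_card]
  refine Nat.card_congr (discEquiv.toEquiv.subtypeEquiv fun a => ?_)
  show addOrderOf a = 2 ∧ qM a = _ ↔ _
  rw [qM_eq_iff a h hq, ← addOrderOf_two]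
  exact and_congr_left' (by rw [← AddEquiv.addOrderOf_eq discEquiv a]; rfl)

lemma card_four (h : ℤ) {q : ℚ} (hq : q = h / 2) :
    Nat.card {a : disc gramM (Mlat : Set (Amb 14)) |
        addOrderOf a = 4 ∧ qM a = (q : AddCircle (2 : ℚ))} =
      Fintype.card {e : DM // e + e ≠ 0 ∧ (normD e + 2 * h) % 8 = 0} := by
  rw [← Nat.card_eq_fintype_card]
  refine Nat.card_congr (discEquiv.toEquiv.subtypeEquiv fun a => ?_)
  show addOrderOf a = 4 ∧ qM a = _ ↔ _
  rw [qM_eq_iff a h hq, ← addOrderOf_four]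
  exact and_congr_left' (by rw [← AddEquiv.addOrderOf_eq discEquiv a]; rfl)

lemma normD_congr {a b : disc gramM (Mlat : Set (Amb 14))} (h : qM a = qM b) :
    normD (discEquiv a) % 8 = normD (discEquiv b) % 8 := by
  rw [qM, qM, ← sub_eq_zero, ← AddCircle.coe_sub, AddCircle.coe_eq_zero_iff] at h
  obtain ⟨n, hn⟩ := h
  have : normD (discEquiv b) - normD (discEquiv a) = 8 * n := by
    rw [zsmul_eq_mul] at hn
    qify
    linarith
  omega

/-! ### Separating the two orbits of order two and value one -/

/-- Four times minus the square of a dual vector as a sum of integral squares, coming from the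
embedding of `A3 = D3` in the cubic lattice of rank 3. -/
lemma four_bq_glue (C β γ : Fin 4 → ℤ) (d : Fin 2 → ℤ) :
    -4 * bq gramM (glue C β γ d) (glue C β γ d) =
      ((∑ i, ((C i + 2 * β i) ^ 2 + (C i + 2 * γ i - 2 * β i) ^ 2 + (C i + 2 * γ i) ^ 2)
        + 2 * (d 0 ^ 2 + d 1 ^ 2) : ℤ) : ℚ) := by
  rw [bqM_eq]
  simp [glue, Fin.sum_univ_succ]
  ring

lemma odd_sq_pos {z : ℤ} (h : z % 2 = 1) : 1 ≤ z ^ 2 := by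
  have : z ≠ 0 := by rintro rfl; simp at h
  have := sq_pos_of_ne_zero this
  omega

/-- No vector of square `-1` has class `(0, 2, 1, 1)`. Four times minus the square would be 4,
written as the sum of squares of `four_bq_glue`. If `C 0` is odd, so are all twelve entries coming
from the `A3` components, and the sum is at least 12. If it is even, both `d` are odd and already
contribute 4, so all `A3` entries vanish, whereas `C 2 - C 0` is 2 modulo 4. -/
lemma norm_ne {x : Amb 14} (hx : x ∈ dualLat gramM (Mlat : Set (Amb 14)))
    (hc : cls x = (0, 2, 1, 1)) : bq gramM x x ≠ -1 := by
  intro hb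
  obtain ⟨C, β, γ, d, t, ht, rfl⟩ := mem_dual.1 hx
  rw [cls_glue] at hc
  simp only [Prod.mk.injEq] at hc
  obtain ⟨h1, h2, h3, h4⟩ := hc
  have h1 := (ZMod.intCast_zmod_eq_zero_iff_dvd _ 4).1 h1
  have h2 := (ZMod.intCast_eq_intCast_iff_dvd_sub (C 2 - C 0) 2 4).1 h2
  have h3 := (ZMod.intCast_eq_intCast_iff_dvd_sub (d 0 - C 0) 1 2).1 (by rw [h3]; rfl)
  have h4 := (ZMod.intCast_eq_intCast_iff_dvd_sub (d 1 - C 0) 1 2).1 (by rw [h4]; rfl)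
  push_cast at h1 h2 h3 h4
  have hs := four_bq_glue C β γ d
  rw [hb] at hs
  rw [show (-4 * -1 : ℚ) = ((4 : ℤ) : ℚ) by norm_num, Int.cast_inj] at hs
  simp only [Fin.sum_univ_four] at hs
  have nn := fun i => And.intro (sq_nonneg (C i + 2 * β i))
    (And.intro (sq_nonneg (C i + 2 * γ i - 2 * β i)) (sq_nonneg (C i + 2 * γ i)))
  have n0 := nn 0
  have n1 := nn 1
  have n2 := nn 2
  have n3 := nn 3
  rcases Int.emod_two_eq_zero_or_one (C 0) with hC | hC
  · have hd0 := odd_sq_pos (z := d 0) (by omega)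
    have hd1 := odd_sq_pos (z := d 1) (by omega)
    have z : ∀ i, (C i + 2 * β i) ^ 2 = 0 → (C i + 2 * γ i - 2 * β i) ^ 2 = 0 →
        (C i + 2 * γ i) ^ 2 = 0 → C i = 0 := fun i p q r => by
      have p := pow_eq_zero_iff (two_ne_zero) |>.1 p
      have q := pow_eq_zero_iff (two_ne_zero) |>.1 q
      have r := pow_eq_zero_iff (two_ne_zero) |>.1 r
      omega
    have z0 := z 0 (by omega) (by omega) (by omega)
    have z2 := z 2 (by omega) (by omega) (by omega)
    omega
  · have o : ∀ i, C i % 2 = 1 → 1 ≤ (C i + 2 * β i) ^ 2 ∧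
        1 ≤ (C i + 2 * γ i - 2 * β i) ^ 2 ∧ 1 ≤ (C i + 2 * γ i) ^ 2 := fun i h =>
      ⟨odd_sq_pos (by omega), odd_sq_pos (by omega), odd_sq_pos (by omega)⟩
    have o0 := o 0 hC
    have o1 := o 1 (by omega)
    have p0 := sq_nonneg (d 0)
    have p1 := sq_nonneg (d 1)
    omega

/-- The class `(0, 0, 1, 1)` contains a vector of square `-1` and the class `(0, 2, 1, 1)` does
not, so no isometry of `M` relates them. -/
lemma not_discRel : ¬ discRel gramM Mlat (discEquiv.symm (0, 0, 1, 1))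
    (discEquiv.symm (0, 2, 1, 1)) := by
  intro h
  obtain ⟨φ, hφ, u, v, huv, hu, hv⟩ := discRel_iff.1 h
  -- `w` is half the sum of the two `A1` generators.
  set w : Amb 14 := glue 0 0 0 ![1, 1] with hw
  have hwd : w ∈ dualLat gramM (Mlat : Set (Amb 14)) :=
    mem_dual.2 ⟨_, _, _, _, 1, by simp, rfl⟩
  have hwc : cls w = (0, 0, 1, 1) := by
    rw [hw, cls_glue]
    simp
  have hwb : bq gramM w w = -1 := by
    rw [bqM_eq, hw]
    simp [glue]
    norm_num
  refine norm_ne (hφ.map_dual hwd) ?_ ((hφ.form w w).trans hwb)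
  have hwu : discEquiv.symm (0, 0, 1, 1) = discMk gramM Mlat ⟨w, hwd⟩ := by
    rw [AddEquiv.symm_apply_eq, discEquiv_mk, hwc]
  have hm := hφ.map_mem (discMk_eq_iff.1 (hwu.symm.trans hu))
  rw [map_sub, huv] at hm
  have h2 : discMk gramM Mlat ⟨φ w, hφ.map_dual hwd⟩ = discMk gramM Mlat v :=
    discMk_eq_iff.2 hm
  rw [← hv, AddEquiv.eq_symm_apply, discEquiv_mk] at h2
  exact h2

/-! ### Transfer to the discriminant group -/

lemma order_two_iff (a : disc gramM (Mlat : Set (Amb 14))) :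
    addOrderOf a = 2 ↔ discEquiv a ≠ 0 ∧ discEquiv a + discEquiv a = 0 := by
  rw [← addOrderOf_two, AddEquiv.addOrderOf_eq]

lemma order_four_iff (a : disc gramM (Mlat : Set (Amb 14))) :
    addOrderOf a = 4 ↔ discEquiv a + discEquiv a ≠ 0 := by
  rw [← addOrderOf_four, AddEquiv.addOrderOf_eq]

/-- The four elements of order 2 and value 1. -/
lemma two_one_iff : ∀ e : DM, ((e ≠ 0 ∧ e + e = 0) ∧ (normD e + 2 * 2) % 8 = 0) ↔
    e = (0, 0, 1, 1) ∨ e = (0, 2, 1, 1) ∨ e = (2, 0, 1, 1) ∨ e = (2, 2, 1, 1) := by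
  decide +kernel

lemma two_one_disc (a : disc gramM (Mlat : Set (Amb 14))) :
    (addOrderOf a = 2 ∧ qM a = ((1 : ℚ) : AddCircle (2 : ℚ))) ↔
      discEquiv a = (0, 0, 1, 1) ∨ discEquiv a = (0, 2, 1, 1) ∨ discEquiv a = (2, 0, 1, 1) ∨
        discEquiv a = (2, 2, 1, 1) := by
  rw [← two_one_iff, order_two_iff, qM_eq_iff a 2 (by norm_num)]

/-- The three classes of order 2 and value 1 other than `(0, 0, 1, 1)` form one orbit. -/
lemma discRel_big (e : DM) (he : e = (0, 2, 1, 1) ∨ e = (2, 0, 1, 1) ∨ e = (2, 2, 1, 1)) :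
    discRel gramM Mlat (discEquiv.symm e) (discEquiv.symm (0, 2, 1, 1)) := by
  have h : ∀ e : DM, (e = (0, 2, 1, 1) ∨ e = (2, 0, 1, 1) ∨ e = (2, 2, 1, 1)) →
      ∃ w ∈ words, w.foldr actD (0, 2, 1, 1) = e := by decide +kernel
  exact discRel_of_base (h e he) (h _ (Or.inl rfl))

lemma orbit_small (a : disc gramM (Mlat : Set (Amb 14))) :
    (addOrderOf a = 2 ∧ qM a = ((1 : ℚ) : AddCircle (2 : ℚ)) ∧
      discRel gramM Mlat a (discEquiv.symm (0, 0, 1, 1))) ↔ discEquiv a = (0, 0, 1, 1) := by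
  rw [← and_assoc, two_one_disc]
  obtain ⟨e, rfl⟩ := discEquiv.symm.surjective a
  rw [AddEquiv.apply_symm_apply]
  constructor
  · rintro ⟨h | h, hr⟩
    · exact h
    · exact absurd (discRel_trans (discRel_symm hr) (discRel_big e h)) not_discRel
  · rintro rfl
    exact ⟨Or.inl rfl, discRel_foldr [] _⟩

lemma orbit_big (a : disc gramM (Mlat : Set (Amb 14))) :
    (addOrderOf a = 2 ∧ qM a = ((1 : ℚ) : AddCircle (2 : ℚ)) ∧
      discRel gramM Mlat a (discEquiv.symm (0, 2, 1, 1))) ↔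
      discEquiv a = (0, 2, 1, 1) ∨ discEquiv a = (2, 0, 1, 1) ∨ discEquiv a = (2, 2, 1, 1) := by
  rw [← and_assoc, two_one_disc]
  obtain ⟨e, rfl⟩ := discEquiv.symm.surjective a
  rw [AddEquiv.apply_symm_apply]
  constructor
  · rintro ⟨rfl | h, hr⟩
    · exact absurd hr not_discRel
    · exact h
  · intro h
    exact ⟨Or.inr h, discRel_big e h⟩

/-- Counting the elements of `A_M` by order and discriminant-form value,
and the orbits of the action induced by `O(M)`: every such set is a single orbit except the
elements of order 2 with value 1, which split into two orbits of cardinalities 1 and 3. -/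
theorem statement12 :
    ∃ Qf : disc gramM ↑Mlat → AddCircle (2:ℚ), qCompat gramM ↑Mlat Qf ∧
      Nat.card {a : disc gramM ↑Mlat | addOrderOf a = 2 ∧ Qf a = ((0:ℚ) : AddCircle (2:ℚ))} = 3 ∧
      Nat.card {a : disc gramM ↑Mlat | addOrderOf a = 2 ∧ Qf a = ((1/2:ℚ) : AddCircle (2:ℚ))} = 8 ∧
      Nat.card {a : disc gramM ↑Mlat | addOrderOf a = 2 ∧ Qf a = ((1:ℚ) : AddCircle (2:ℚ))} = 4 ∧
      Nat.card {a : disc gramM ↑Mlat | addOrderOf a = 2 ∧ Qf a = ((3/2:ℚ) : AddCircle (2:ℚ))} = 0 ∧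
      Nat.card {a : disc gramM ↑Mlat | addOrderOf a = 4 ∧ Qf a = ((0:ℚ) : AddCircle (2:ℚ))} = 12 ∧
      Nat.card {a : disc gramM ↑Mlat | addOrderOf a = 4 ∧ Qf a = ((1/2:ℚ) : AddCircle (2:ℚ))} = 12 ∧
      Nat.card {a : disc gramM ↑Mlat | addOrderOf a = 4 ∧ Qf a = ((1:ℚ) : AddCircle (2:ℚ))} = 12 ∧
      Nat.card {a : disc gramM ↑Mlat | addOrderOf a = 4 ∧ Qf a = ((3/2:ℚ) : AddCircle (2:ℚ))} = 12 ∧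
      (∀ (k : ℕ) (g : AddCircle (2:ℚ)), (k = 2 ∨ k = 4) →
        ¬(k = 2 ∧ g = ((1:ℚ) : AddCircle (2:ℚ))) →
        ∀ a b : disc gramM ↑Mlat,
          addOrderOf a = k → Qf a = g → addOrderOf b = k → Qf b = g →
          discRel gramM ↑Mlat a b) ∧
      (∃ a₀ b₀ : disc gramM ↑Mlat,
        (addOrderOf a₀ = 2 ∧ Qf a₀ = ((1:ℚ) : AddCircle (2:ℚ))) ∧
        (addOrderOf b₀ = 2 ∧ Qf b₀ = ((1:ℚ) : AddCircle (2:ℚ))) ∧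
        ¬ discRel gramM ↑Mlat a₀ b₀ ∧
        (∀ a : disc gramM ↑Mlat, addOrderOf a = 2 → Qf a = ((1:ℚ) : AddCircle (2:ℚ)) →
          discRel gramM ↑Mlat a a₀ ∨ discRel gramM ↑Mlat a b₀) ∧
        Nat.card {a : disc gramM ↑Mlat | addOrderOf a = 2 ∧
          Qf a = ((1:ℚ) : AddCircle (2:ℚ)) ∧ discRel gramM ↑Mlat a a₀} = 1 ∧
        Nat.card {a : disc gramM ↑Mlat | addOrderOf a = 2 ∧
          Qf a = ((1:ℚ) : AddCircle (2:ℚ)) ∧ discRel gramM ↑Mlat a b₀} = 3) := by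
  refine ⟨qM, qM_compat, ?_, ?_, ?_, ?_, ?_, ?_, ?_, ?_, ?_, ?_⟩
  · rw [card_two 0 (by norm_num)]; decide +kernel
  · rw [card_two 1 (by norm_num)]; decide +kernel
  · rw [card_two 2 (by norm_num)]; decide +kernel
  · rw [card_two 3 (by norm_num)]; decide +kernel
  · rw [card_four 0 (by norm_num)]; decide +kernel
  · rw [card_four 1 (by norm_num)]; decide +kernel
  · rw [card_four 2 (by norm_num)]; decide +kernel
  · rw [card_four 3 (by norm_num)]; decide +kernel
  · rintro k g hk hne a b ha hqa hb hqb
    have hn := normD_congr (hqa.trans hqb.symm)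
    rw [← discEquiv.symm_apply_apply a, ← discEquiv.symm_apply_apply b]
    rcases hk with rfl | rfl
    · have hg : ∀ c, addOrderOf c = 2 → qM c = g → discEquiv c ≠ (0, 0, 1, 1) :=
        fun c hc hqc h => hne ⟨rfl, hqc.symm.trans ((two_one_disc c).2 (Or.inl h)).2⟩
      obtain ⟨ha0, ha2⟩ := (order_two_iff a).1 ha
      obtain ⟨hb0, hb2⟩ := (order_two_iff b).1 hb
      have h := orbits_two _ ⟨ha0, ha2, hg a ha hqa⟩
      rw [hn] at h
      exact discRel_of_base h (orbits_two _ ⟨hb0, hb2, hg b hb hqb⟩)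
    · have h := orbits_four _ ((order_four_iff a).1 ha)
      rw [hn] at h
      exact discRel_of_base h (orbits_four _ ((order_four_iff b).1 hb))
  · refine ⟨discEquiv.symm (0, 0, 1, 1), discEquiv.symm (0, 2, 1, 1), ?_, ?_, not_discRel,
      ?_, ?_, ?_⟩
    · exact (two_one_disc _).2 (Or.inl (discEquiv.apply_symm_apply _))
    · exact (two_one_disc _).2 (Or.inr (Or.inl (discEquiv.apply_symm_apply _)))
    · intro a ha hqa
      rcases (two_one_disc a).1 ⟨ha, hqa⟩ with h | h
      · exact Or.inl ((orbit_small a).2 h).2.2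
      · exact Or.inr ((orbit_big a).2 h).2.2
    · have : Nat.card {a : disc gramM (Mlat : Set (Amb 14)) | addOrderOf a = 2 ∧
          qM a = ((1 : ℚ) : AddCircle (2 : ℚ)) ∧
          discRel gramM Mlat a (discEquiv.symm (0, 0, 1, 1))} =
          Nat.card {e : DM // e = (0, 0, 1, 1)} :=
        Nat.card_congr (discEquiv.toEquiv.subtypeEquiv orbit_small)
      rw [this, Nat.card_eq_fintype_card]
      decide +kernel
    · have : Nat.card {a : disc gramM (Mlat : Set (Amb 14)) | addOrderOf a = 2 ∧
          qM a = ((1 : ℚ) : AddCircle (2 : ℚ)) ∧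
          discRel gramM Mlat a (discEquiv.symm (0, 2, 1, 1))} =
          Nat.card {e : DM // e = (0, 2, 1, 1) ∨ e = (2, 0, 1, 1) ∨ e = (2, 2, 1, 1)} :=
        Nat.card_congr (discEquiv.toEquiv.subtypeEquiv orbit_big)
      rw [this, Nat.card_eq_fintype_card]
      decide +kernel

end K3Paper
end
end

section
/- For every integer d ≥ 1, the lattice Γ ⊕ ⟨2d⟩ admits no primitive embedding into Λ_K3. -/
/-!
For a primitive sublattice `S` of an integral lattice of rank `m` whose form is nondegenerate
modulo `2`, the space `S / 2S` embeds in the quadratic space `(ℤ/2)^m`. The radical of the mod-2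
form on `S / 2S` lies in the orthogonal complement of the image of `S / 2S`, so
`rank S + dim (radical) ≤ m` (`card_add_card_le_of_isPrimEmb`).

Here `S = Γ ⊕ ⟨2d⟩` has rank `14 + 1 = 15` and `m = 22`, so the radical could have dimension at
most `7`. But already the radical of `Γ / 2Γ` has dimension `8`: the first eight vectors of the
basis `basG` of `Γ` pair evenly with all of `Γ`; the generator of `⟨2d⟩` is a ninth such vector.
To see that the fifteen vectors are independent modulo `2S`, the dual coordinates `coef` are shown
to be integral on `S` (`coef_integral`). The only nontrivial point there is the upper bound on
`R̂ = π(Ω₄)`: six combinations of coordinates are integral on `Λ`, and they restrict to the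
required ones on `Ω₄`, where the coordinates of `ρ`, `ω₁`, `ω₂` vanish.
-/

noncomputable section
open Matrix

namespace K3Paper

/-- the Gram matrix of the ambient space of `Γ ⊕ ⟨2d⟩` -/
def gG17 (d : ℕ) : Matrix (Fin 23) (Fin 23) ℚ := extGram gramGam (2 * d)

/-- the copy of `Γ` in the extended ambient space -/
def A17 : Submodule ℤ (Amb 23) := Submodule.span ℤ (extV '' (GamLat : Set (Amb 22)))

/-- the copy of `⟨2d⟩` -/
def B17 : Submodule ℤ (Amb 23) := Submodule.span ℤ {lastV 22}


/-! ### Primitive embeddings modulo 2 -/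

/-- The vectors at which all components of a linear map take integer values. -/
def intLat {n m : ℕ} (f : Amb n →ₗ[ℚ] (Fin m → ℚ)) : Submodule ℤ (Amb n) where
  carrier := {x | ∀ i, ∃ k : ℤ, f x i = k}
  zero_mem' := fun i => ⟨0, by simp⟩
  add_mem' := fun {x y} hx hy i => by
    obtain ⟨a, ha⟩ := hx i
    obtain ⟨b, hb⟩ := hy i
    exact ⟨a + b, by simp [ha, hb]⟩
  smul_mem' := fun c x hx i => by
    obtain ⟨a, ha⟩ := hx i
    refine ⟨c * a, ?_⟩
    have : f (c • x) = c • f x := map_zsmul f c x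
    rw [this, Pi.smul_apply, ha, zsmul_eq_mul]
    push_cast
    rfl

/-- Reduction modulo `2` of an integer vector. -/
def red {m : ℕ} (v : Fin m → ℤ) : Fin m → ZMod 2 := fun i => (v i : ZMod 2)

lemma red_sum_smul {m N : ℕ} (c : Fin N → ℤ) (v : Fin N → Fin m → ℤ) :
    red (∑ j, c j • v j) = ∑ j, (c j : ZMod 2) • red (v j) := by
  ext i
  simp [red, Finset.sum_apply]

lemma exists_two_smul_of_red_eq_zero {m : ℕ} {v : Fin m → ℤ} (h : red v = 0) :
    ∃ w : Fin m → ℤ, v = (2 : ℤ) • w := by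
  have hdvd : ∀ i, ∃ k : ℤ, v i = 2 * k := fun i =>
    (ZMod.intCast_zmod_eq_zero_iff_dvd (v i) 2).1 (congrFun h i)
  choose w hw using hdvd
  exact ⟨w, funext fun i => by simp [hw i]⟩

lemma toBilin'_red {m : ℕ} (H : Matrix (Fin m) (Fin m) ℤ) (x y : Fin m → ℤ) :
    Matrix.toBilin' (H.map (Int.cast : ℤ → ZMod 2)) (red x) (red y) =
      ((bz H x y : ℤ) : ZMod 2) := by
  simp [Matrix.toBilin'_apply', bz, red, dotProduct, mulVec]

/-- Vectors of `S` admitting dual coordinates that are integral on `S` stay independent modulo `2`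
under a primitive embedding. -/
lemma linearIndependent_red {n m N : ℕ} {G : Matrix (Fin n) (Fin n) ℚ} {S : Submodule ℤ (Amb n)}
    {H : Matrix (Fin m) (Fin m) ℤ} {φ : ↥S →ₗ[ℤ] (Fin m → ℤ)} (hφ : IsPrimEmb G S H φ)
    (s : Fin N → ↥S) (f : Amb n →ₗ[ℚ] (Fin N → ℚ)) (hint : S ≤ intLat f)
    (hdual : ∀ j, f (s j) = Pi.single j 1) :
    LinearIndependent (ZMod 2) (fun j => red (φ (s j))) := by
  obtain ⟨hinj, -, hprim⟩ := hφ
  rw [Fintype.linearIndependent_iff]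
  intro g hg i
  set c : Fin N → ℤ := fun j => ((g j).val : ℤ) with hc
  have hcg : ∀ j, ((c j : ℤ) : ZMod 2) = g j := fun j => by simp [hc]
  have h0 : red (∑ j, c j • φ (s j)) = 0 := by
    rw [red_sum_smul]
    simpa only [hcg] using hg
  obtain ⟨w, hw⟩ := exists_two_smul_of_red_eq_zero h0
  have hsum : φ (∑ j, c j • s j) = (2 : ℤ) • w := by
    rw [← hw, map_sum]
    simp only [map_smul]
  obtain ⟨y, rfl⟩ := hprim w 2 two_ne_zero ⟨_, hsum⟩
  rw [← map_smul] at hsum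
  have hy : ∑ j, c j • (s j : Amb n) = (2 : ℤ) • (y : Amb n) := by
    simpa using congrArg (Subtype.val) (hinj hsum)
  obtain ⟨k, hk⟩ := hint y.2 i
  have hfy := congrFun (congrArg f hy) i
  rw [map_sum, map_zsmul, Finset.sum_apply] at hfy
  simp only [map_zsmul, hdual, Pi.smul_apply, hk, Pi.single_apply] at hfy
  simp only [smul_ite, smul_zero, Finset.sum_ite_eq, Finset.mem_univ, if_true, zsmul_eq_mul,
    mul_one] at hfy
  have hck : c i = 2 * k := by exact_mod_cast hfy
  rw [← hcg i, hck]
  have h2 : (2 : ZMod 2) = 0 := rfl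
  simp [h2]

/-- A rank bound for primitive embeddings into a lattice that is nondegenerate modulo `2`: the
first `k` of the `N` independent vectors lie in the radical of the form modulo `2`. -/
lemma card_add_card_le_of_isPrimEmb {n m N k : ℕ} {G : Matrix (Fin n) (Fin n) ℚ}
    {S : Submodule ℤ (Amb n)} {H : Matrix (Fin m) (Fin m) ℤ} {φ : ↥S →ₗ[ℤ] (Fin m → ℤ)}
    (hφ : IsPrimEmb G S H φ) (hsymm : H.IsSymm)
    (hdet : (H.map (Int.cast : ℤ → ZMod 2)).det ≠ 0)
    (s : Fin N → ↥S) (f : Amb n →ₗ[ℚ] (Fin N → ℚ)) (hint : S ≤ intLat f)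
    (hdual : ∀ j, f (s j) = Pi.single j 1) (hkN : k ≤ N)
    (hrad : ∀ (i : Fin k) (j : Fin N),
      ∃ t : ℤ, bq G (s (Fin.castLE hkN i)) (s j) = 2 * t) :
    k + N ≤ m := by
  set B := Matrix.toBilin' (H.map (Int.cast : ℤ → ZMod 2)) with hB
  set u : Fin N → Fin m → ZMod 2 := fun j => red (φ (s j)) with hu
  have hli : LinearIndependent (ZMod 2) u := linearIndependent_red hφ s f hint hdual
  have hlik : LinearIndependent (ZMod 2) (u ∘ Fin.castLE hkN) :=
    hli.comp _ (Fin.castLE_injective hkN)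
  have hnd : B.Nondegenerate := LinearMap.BilinForm.nondegenerate_toBilin'_of_det_ne_zero' _ hdet
  have hBs : B.IsSymm := by
    constructor
    intro x y
    have hs : (H.map (Int.cast : ℤ → ZMod 2))ᵀ = H.map (Int.cast : ℤ → ZMod 2) := by
      rw [← Matrix.transpose_map, hsymm]
    simp only [hB, Matrix.toBilin'_apply']
    rw [Matrix.dotProduct_mulVec, ← Matrix.mulVec_transpose, hs, dotProduct_comm]
  have hle : Submodule.span (ZMod 2) (Set.range u) ≤
      B.orthogonal (Submodule.span (ZMod 2) (Set.range (u ∘ Fin.castLE hkN))) := by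
    rw [Submodule.span_le]
    rintro _ ⟨j, rfl⟩ x hx
    induction hx using Submodule.span_induction with
    | mem x hx =>
      obtain ⟨i, rfl⟩ := hx
      obtain ⟨t, ht⟩ := hrad i j
      rw [hφ.2.1] at ht
      have ht' : bz H (φ (s (Fin.castLE hkN i))) (φ (s j)) = 2 * t := by exact_mod_cast ht
      have h2 : (2 : ZMod 2) = 0 := rfl
      simp only [hu, hB, Function.comp_apply, toBilin'_red, ht']
      simp [h2]
    | zero => simp
    | add x y _ _ hx hy =>
      rw [map_add, LinearMap.add_apply, hx, hy, add_zero]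
    | smul a x _ hx =>
      rw [map_smul, LinearMap.smul_apply, hx, smul_zero]
  have h1 := Submodule.finrank_mono hle
  have h3 := (LinearMap.BilinForm.finrank_orthogonal hnd
    (Submodule.span (ZMod 2) (Set.range (u ∘ Fin.castLE hkN))))
  rw [h3, finrank_span_eq_card hli, finrank_span_eq_card hlik] at h1
  have h4 := hlik.fintype_card_le_finrank
  simp only [Fintype.card_fin, Module.finrank_fin_fun] at h1 h4
  omega

/-! ### The K3 form modulo 2 -/

lemma gramK3_isSymm : gramK3.IsSymm := by
  have h : ∀ i j : Fin 22, k3ent j i = k3ent i j := by decide +kernel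
  exact Matrix.IsSymm.ext h

/-- The inverse of the `E8` Gram matrix modulo `2`, given by its support. -/
def e8inv (i j : ℕ) : ZMod 2 :=
  if (i, j) ∈ ([(0,1),(1,0),(0,2),(2,0),(1,3),(3,1),(1,5),(5,1),(1,7),(7,1),
      (4,5),(5,4),(4,7),(7,4),(6,7),(7,6)] : List (ℕ × ℕ)) then 1 else 0

/-- The inverse of the K3 Gram matrix modulo `2`: two blocks `e8inv`, and `U` is its own inverse. -/
def k3inv : Matrix (Fin 22) (Fin 22) (ZMod 2) := Matrix.of fun i j =>
  if i.1 < 8 ∧ j.1 < 8 then e8inv i j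
  else if 8 ≤ i.1 ∧ i.1 < 16 ∧ 8 ≤ j.1 ∧ j.1 < 16 then e8inv (i - 8) (j - 8)
  else if 16 ≤ i.1 ∧ 16 ≤ j.1 then (k3ent i j : ZMod 2)
  else 0

lemma det_gramK3_mod_two_ne_zero : (gramK3.map (Int.cast : ℤ → ZMod 2)).det ≠ 0 := by
  have h : gramK3.map (Int.cast : ℤ → ZMod 2) * k3inv = 1 := by
    have h : ∀ p : Fin 22 × Fin 22,
        (gramK3.map (Int.cast : ℤ → ZMod 2) * k3inv) p.1 p.2 =
          (1 : Matrix (Fin 22) (Fin 22) (ZMod 2)) p.1 p.2 := by decide +kernel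
    ext i j
    exact h (i, j)
  exact (Matrix.isUnit_det_of_right_inverse h).ne_zero

/-! ### A basis of `Γ` -/

/-- A basis of `Γ`, whose first eight members pair evenly with all of `Γ`. -/
def basG : Fin 14 → Amb 22 :=
  ![sb 2 - sb 6,
    sb 3 - sb 7,
    (2:ℚ)⁻¹ • (sb 1 + sb 3 - sb 5 - sb 7 + sb 10),
    (2:ℚ)⁻¹ • (sb 8 - sb 9 + sb 10),
    nG 1 + nG 5,
    nG 1 + nG 6,
    nG 2 + nG 3,
    nG 4 + nG 7,
    x1G, x2G, nuG, nG 1, nG 2, nG 4]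

/-- Invariant vectors have constant coordinates along the orbits of the permuted basis vectors, and
no component along `σ`. -/
lemma tau_fixed {v : Amb 22} (hv : v ∈ FixTau) :
    (∀ i : Fin 12, v ⟨i + 4, by omega⟩ = v ⟨i, by omega⟩) ∧ v 17 = v 16 ∧ v 18 = 0 := by
  have h : tauL v = v := by
    have := hv.2
    simpa [sub_eq_zero] using this
  have hc : ∀ k, ∑ j, tauMat k j * v j = v k := fun k => congrFun h k
  refine ⟨fun i => ?_, ?_, ?_⟩
  · have := hc ⟨i + 4, by omega⟩
    rw [← this, Finset.sum_eq_single (⟨i, by omega⟩ : Fin 22)]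
    · have h1 : ¬ ((i : ℕ) + 4 < 4) := by omega
      have h2 : (i : ℕ) + 4 < 16 := by omega
      simp [tauMat, tauEnt, h2]
    · intro j _ hj
      have h2 : (i : ℕ) + 4 < 16 := by omega
      have h3 : (j : ℕ) ≠ i := fun h => hj (Fin.ext h)
      simp [tauMat, tauEnt, h2, h3]
    · simp
  · have := hc 17
    simpa [tauMat, tauEnt, Fin.sum_univ_succ] using this.symm
  · have := hc 18
    simp [tauMat, tauEnt, Fin.sum_univ_succ] at this
    linarith

lemma sb_mem_Lam (i : Fin 22) : sb i ∈ Lam := Submodule.subset_span (Or.inl ⟨i, rfl⟩)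

lemma bq_gramW (x v : Amb 22) :
    bq gramW x v =
      x 0 * (-2 * v 0 + v 2) + x 1 * (-2 * v 1 + v 2) + x 2 * (-2 * v 2 + v 0 + v 1 + v 3)
      + x 3 * (-2 * v 3 + v 2)
      + x 4 * (-2 * v 4 + v 6) + x 5 * (-2 * v 5 + v 6) + x 6 * (-2 * v 6 + v 4 + v 5 + v 7)
      + x 7 * (-2 * v 7 + v 6)
      + x 8 * (-2 * v 8 + v 10) + x 9 * (-2 * v 9 + v 10)
      + x 10 * (-2 * v 10 + v 8 + v 9 + v 11) + x 11 * (-2 * v 11 + v 10)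
      + x 12 * (-2 * v 12 + v 14) + x 13 * (-2 * v 13 + v 14)
      + x 14 * (-2 * v 14 + v 12 + v 13 + v 15) + x 15 * (-2 * v 15 + v 14)
      - 2 * x 16 * v 16 - 2 * x 17 * v 17 - 4 * x 18 * v 18 + 4 * x 19 * v 19
      + 2 * x 20 * v 20 + 2 * x 21 * v 21 := by
  have e : ∀ (a b : Fin 22), gramW a b = gramWent a b := fun a b => rfl
  simp only [bq, dotProduct, mulVec, e]
  simp [Fin.sum_univ_succ, gramWent]
  ring

/-- Against an invariant vector, the form only sees the sums over the orbits of `τ`. -/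
lemma bq_of_tau_fixed {x v : Amb 22} (hv : v ∈ FixTau) :
    bq gramW x v =
      (x 0 + x 4 + x 8 + x 12) * (-2 * v 0 + v 2) + (x 1 + x 5 + x 9 + x 13) * (-2 * v 1 + v 2)
      + (x 2 + x 6 + x 10 + x 14) * (-2 * v 2 + v 0 + v 1 + v 3)
      + (x 3 + x 7 + x 11 + x 15) * (-2 * v 3 + v 2)
      - 2 * (x 16 + x 17) * v 16 + 4 * x 19 * v 19 + 2 * x 20 * v 20 + 2 * x 21 * v 21 := by
  obtain ⟨h, h17, h18⟩ := tau_fixed hv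
  have h0 : v 4 = v 0 := h 0
  have h1 : v 5 = v 1 := h 1
  have h2 : v 6 = v 2 := h 2
  have h3 : v 7 = v 3 := h 3
  have h4 : v 8 = v 4 := h 4
  have h5 : v 9 = v 5 := h 5
  have h6 : v 10 = v 6 := h 6
  have h7 : v 11 = v 7 := h 7
  have h8 : v 12 = v 8 := h 8
  have h9 : v 13 = v 9 := h 9
  have h10 : v 14 = v 10 := h 10
  have h11 : v 15 = v 11 := h 11
  rw [bq_gramW, h8, h9, h10, h11, h4, h5, h6, h7, h0, h1, h2, h3, h17, h18]
  ring

/-- A vector of `Λ` whose coordinates sum to zero along each orbit of `τ` is coinvariant. -/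
lemma mem_Om4_of {x : Amb 22} (hx : x ∈ Lam)
    (h0 : x 0 + x 4 + x 8 + x 12 = 0) (h1 : x 1 + x 5 + x 9 + x 13 = 0)
    (h2 : x 2 + x 6 + x 10 + x 14 = 0) (h3 : x 3 + x 7 + x 11 + x 15 = 0)
    (h4 : x 16 + x 17 = 0) (h5 : x 19 = 0) (h6 : x 20 = 0) (h7 : x 21 = 0) : x ∈ Om4 := by
  refine ⟨hx, ?_⟩
  simp only [Submodule.mem_iInf, SetLike.mem_coe, LinearMap.mem_ker]
  intro v hv
  show bq gramW x v = 0
  rw [bq_of_tau_fixed hv, h0, h1, h2, h3, h4, h5, h6, h7]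
  ring

/-- A lattice vector fixed by `τ` pairs to zero with the coinvariant lattice. -/
lemma bq_eq_zero_of_mem_Om4 {x v : Amb 22} (hx : x ∈ Om4) (hv : v ∈ Lam) (hτ : tauL v = v) :
    bq gramW x v = 0 := by
  have hv' : v ∈ FixTau := ⟨hv, by simp [hτ]⟩
  have h := hx.2
  simp only [Submodule.mem_iInf, SetLike.mem_coe, LinearMap.mem_ker] at h
  exact h v hv'

/-- `Ω₄` is orthogonal to the invariant vectors `ρ`, `ω₁` and `ω₂`. -/
lemma coords_of_mem_Om4 {x : Amb 22} (hx : x ∈ Om4) : x 19 = 0 ∧ x 20 = 0 ∧ x 21 = 0 := by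
  have hτ : ∀ i : Fin 22, 19 ≤ i → tauL (sb i) = sb i := by
    have h : ∀ p : Fin 22 × Fin 22, 19 ≤ p.1 → tauL (sb p.1) p.2 = sb p.1 p.2 := by
      decide +kernel
    exact fun i hi => funext fun j => h (i, j) hi
  have h := fun (i : Fin 22) (hi : 19 ≤ i) => bq_eq_zero_of_mem_Om4 hx (sb_mem_Lam i) (hτ i hi)
  have h19 := h 19 le_rfl
  have h20 := h 20 (by decide)
  have h21 := h 21 (by decide)
  rw [bq_gramW] at h19 h20 h21
  simp [sb] at h19 h20 h21
  exact ⟨h19, h20, h21⟩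

/-- The element of `Ω₄` with image `(e₂ + e₄ - f₂ - f₄ + σ)/2` under `π`. -/
def om4a : Amb 22 := alV - beV + eW 3 - fW 3

/-- The element of `Ω₄` with image `(a₁ - a₂ + σ)/2` under `π`. -/
def om4b : Amb 22 := epV - chiV - a2V + sgV - fW 1 - fW 3

lemma basG_mem (j : Fin 14) : basG j ∈ GamLat := by
  have hglue : ∀ g ∈ ({chiV, alV, beV, gaV, deV, epV, zeV, etV} : Set (Amb 22)), g ∈ Lam :=
    fun g hg => Submodule.subset_span (Or.inr hg)
  have hR : ∀ x y : Amb 22, x ∈ Om4 → piL x = y → y ∈ GamLat := by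
    rintro x _ hx rfl
    exact Submodule.subset_span (Or.inl (Or.inl ⟨x, hx, rfl⟩))
  have hn : ∀ i, nG i ∈ GamLat := fun i =>
    Submodule.subset_span (Or.inl (Or.inr (Submodule.subset_span (Or.inl ⟨i, rfl⟩))))
  have hnu : nuG ∈ GamLat :=
    Submodule.subset_span (Or.inl (Or.inr (Submodule.subset_span (Or.inr rfl))))
  have hx1 : x1G ∈ GamLat := Submodule.subset_span (Or.inr (Or.inl rfl))
  have hx2 : x2G ∈ GamLat := Submodule.subset_span (Or.inr (Or.inr rfl))
  have h0 : basG 0 ∈ GamLat := by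
    refine hR (sb 2 - sb 6) _ (mem_Om4_of (sub_mem (sb_mem_Lam _) (sb_mem_Lam _))
      ?_ ?_ ?_ ?_ ?_ ?_ ?_ ?_) (funext ?_) <;> decide +kernel
  have h1 : basG 1 ∈ GamLat := by
    refine hR (sb 3 - sb 7) _ (mem_Om4_of (sub_mem (sb_mem_Lam _) (sb_mem_Lam _))
      ?_ ?_ ?_ ?_ ?_ ?_ ?_ ?_) (funext ?_) <;> decide +kernel
  have ha : om4a ∈ Lam :=
    sub_mem (add_mem (sub_mem (hglue _ (by simp)) (hglue _ (by simp))) (sb_mem_Lam _))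
      (sb_mem_Lam _)
  have hb : om4b ∈ Lam :=
    sub_mem (sub_mem (add_mem (sub_mem (sub_mem (hglue _ (by simp)) (hglue _ (by simp)))
      (sb_mem_Lam _)) (sb_mem_Lam _)) (sb_mem_Lam _)) (sb_mem_Lam _)
  have h2 : basG 2 ∈ GamLat := by
    refine hR om4a _ (mem_Om4_of ha ?_ ?_ ?_ ?_ ?_ ?_ ?_ ?_) (funext ?_) <;> decide +kernel
  have h3 : basG 3 ∈ GamLat := by
    refine hR om4b _ (mem_Om4_of hb ?_ ?_ ?_ ?_ ?_ ?_ ?_ ?_) (funext ?_) <;> decide +kernel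
  fin_cases j
  · exact h0
  · exact h1
  · exact h2
  · exact h3
  · exact add_mem (hn 1) (hn 5)
  · exact add_mem (hn 1) (hn 6)
  · exact add_mem (hn 2) (hn 3)
  · exact add_mem (hn 4) (hn 7)
  · exact hx1
  · exact hx2
  · exact hnu
  · exact hn 1
  · exact hn 2
  · exact hn 4

/-- The first eight members of `basG` lie in the radical of the form modulo `2`. Evenness is
expressed decidably, as half the product having denominator `1`. -/
lemma basG_radical : ∀ p : Fin 8 × Fin 14,
    (bq gramGam (basG (Fin.castLE (by omega) p.1)) (basG p.2) / 2).den = 1 := by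
  decide +kernel

/-! ### Integrality of the dual coordinates -/

/-- Six linear functionals, integral on `Λ`, which on `Ω₄` only depend on the image under `π`. -/
def lamCoef : Amb 22 →ₗ[ℚ] (Fin 6 → ℚ) where
  toFun x := ![x 0 + x 8 - 2 * x 19 - x 20 - x 21,
    2 * (x 1 + x 9),
    x 2 + x 10,
    x 3 + x 11 - x 1 - x 9 - 2 * x 19 - x 20 - x 21,
    2 * x 16,
    x 18 - x 1 - x 9 - x 16 + x 19 + x 20]
  map_add' x y := by ext i; fin_cases i <;> simp <;> ring
  map_smul' c x := by ext i; fin_cases i <;> simp <;> ring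

/-- Integrality is stated as `den = 1` where it is checked by evaluation, this being decidable. -/
lemma exists_int_of_den {q : ℚ} (h : q.den = 1) : ∃ k : ℤ, q = k :=
  ⟨q.num, (Rat.den_eq_one_iff q).1 h |>.symm⟩

lemma Lam_le_intLat : Lam ≤ intLat lamCoef := by
  have hsb : ∀ p : Fin 22 × Fin 6, (lamCoef (sb p.1) p.2).den = 1 := by decide +kernel
  have hgl : ∀ p : Fin 8 × Fin 6,
      (lamCoef (![chiV, alV, beV, gaV, deV, epV, zeV, etV] p.1) p.2).den = 1 := by decide +kernel
  have hgl' : ∀ j : Fin 8, ![chiV, alV, beV, gaV, deV, epV, zeV, etV] j ∈ intLat lamCoef :=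
    fun j i => exists_int_of_den (hgl (j, i))
  refine Submodule.span_le.2 ?_
  rintro x (⟨j, rfl⟩ | hx)
  · exact fun i => exists_int_of_den (hsb (j, i))
  · rcases hx with rfl | rfl | rfl | rfl | rfl | rfl | rfl | rfl
    exacts [hgl' 0, hgl' 1, hgl' 2, hgl' 3, hgl' 4, hgl' 5, hgl' 6, hgl' 7]

/-- The coordinates dual to `basG`. -/
def gamCoef : Amb 22 →ₗ[ℚ] (Fin 14 → ℚ) where
  toFun y := ![y 2,
    y 3 - y 1 - y 0,
    2 * y 1,
    2 * y 8 - y 0,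
    y 19 - y 14,
    y 20 - y 14,
    y 17 - (y 10 - y 1 - y 8) - y 0 - y 14,
    y 21 - (y 10 - y 1 - y 8) - y 14,
    2 * (y 10 - y 1 - y 8),
    2 * y 0,
    2 * y 14,
    y 15 - y 19 - y 20 + y 14,
    y 16 - y 17,
    y 18 - y 21]
  map_add' x y := by ext i; fin_cases i <;> simp <;> ring
  map_smul' c x := by ext i; fin_cases i <;> simp <;> ring

lemma gamCoef_basG (j : Fin 14) : gamCoef (basG j) = Pi.single j 1 := by
  have h : ∀ p : Fin 14 × Fin 14,
      gamCoef (basG p.1) p.2 = (Pi.single p.1 1 : Fin 14 → ℚ) p.2 := by decide +kernel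
  exact funext fun i => h (j, i)

lemma Rhat_le_intLat : Rhat ≤ intLat gamCoef := by
  rintro _ ⟨x, hx, rfl⟩
  obtain ⟨h19, h20, h21⟩ := coords_of_mem_Om4 hx
  have hint := Lam_le_intLat hx.1
  obtain ⟨k0, hk0⟩ := hint 0
  obtain ⟨k1, hk1⟩ := hint 1
  obtain ⟨k2, hk2⟩ := hint 2
  obtain ⟨k3, hk3⟩ := hint 3
  obtain ⟨k4, hk4⟩ := hint 4
  obtain ⟨k5, hk5⟩ := hint 5
  simp [lamCoef, h19, h20, h21] at hk0 hk1 hk2 hk3 hk4 hk5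
  have hpi : ∀ k, piL x k = ∑ j, piMat k j * x j := fun k => rfl
  have p0 : piL x 0 = x 0 + x 8 := by simp [hpi, piMat, piEnt, Fin.sum_univ_succ]
  have p1 : piL x 1 = x 1 + x 9 := by simp [hpi, piMat, piEnt, Fin.sum_univ_succ]
  have p2 : piL x 2 = x 2 + x 10 := by simp [hpi, piMat, piEnt, Fin.sum_univ_succ]
  have p3 : piL x 3 = x 3 + x 11 := by simp [hpi, piMat, piEnt, Fin.sum_univ_succ]
  have p8 : piL x 8 = x 16 := by simp [hpi, piMat, piEnt, Fin.sum_univ_succ]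
  have p10 : piL x 10 = x 18 := by simp [hpi, piMat, piEnt, Fin.sum_univ_succ]
  have pn : ∀ k : Fin 22, 14 ≤ k → piL x k = 0 := by
    intro k hk
    have h1 : ¬ ((k : ℕ) < 8) := by omega
    have h2 : ¬ ((k : ℕ) < 14) := by omega
    simp [hpi, piMat, piEnt, h1, h2]
  set y := piL x with hy
  have hyR : gamCoef y =
      ![(k2 : ℚ), k3 - k0, k1, k4 - k0, 0, 0, -k5 - k0, -k5, 2 * k5, 2 * k0, 0, 0, 0, 0] := by
    ext i
    fin_cases i <;>
      simp [gamCoef, p0, p1, p2, p3, p8, p10, pn 14 (by decide), pn 15 (by decide),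
        pn 16 (by decide), pn 17 (by decide), pn 18 (by decide), pn 19 (by decide),
        pn 20 (by decide), pn 21 (by decide)] <;> linarith
  intro i
  have hyi : gamCoef y i = ((![k2, k3 - k0, k1, k4 - k0, 0, 0, -k5 - k0, -k5, 2 * k5, 2 * k0,
      0, 0, 0, 0] : Fin 14 → ℤ) i : ℤ) := by
    rw [hyR]
    fin_cases i <;> simp
  exact ⟨_, hyi⟩

/-- The dual coordinates of `basG` are integral on `Γ`. -/
lemma GamLat_le_intLat : GamLat ≤ intLat gamCoef := by
  have hn : ∀ p : Fin 8 × Fin 14, (gamCoef (nG p.1) p.2).den = 1 := by decide +kernel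
  have hnu : ∀ i : Fin 14, (gamCoef nuG i).den = 1 := by decide +kernel
  have hx1 : ∀ i : Fin 14, (gamCoef x1G i).den = 1 := by decide +kernel
  have hx2 : ∀ i : Fin 14, (gamCoef x2G i).den = 1 := by decide +kernel
  refine Submodule.span_le.2 ?_
  rintro y ((hy | hy) | (rfl | rfl))
  · exact Rhat_le_intLat hy
  · refine (Submodule.span_le (p := intLat gamCoef)).2 ?_ hy
    rintro _ (⟨j, rfl⟩ | rfl)
    · exact fun i => exists_int_of_den (hn (j, i))
    · exact fun i => exists_int_of_den (hnu i)
  · exact fun i => exists_int_of_den (hx1 i)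
  · exact fun i => exists_int_of_den (hx2 i)

/-! ### The lattice `Γ ⊕ ⟨2d⟩` -/

lemma extV_castSucc {n : ℕ} (x : Amb n) (i : Fin n) : extV x i.castSucc = x i := by
  simp [extV]

lemma extV_last {n : ℕ} (x : Amb n) : extV x (Fin.last n) = 0 := by
  simp [extV]

lemma lastV_castSucc {n : ℕ} (i : Fin n) : lastV n i.castSucc = 0 := by
  simp [lastV, (Fin.castSucc_lt_last i).ne]

lemma lastV_last {n : ℕ} : lastV n (Fin.last n) = 1 := by
  simp [lastV]

lemma bq_extV_extV {n : ℕ} (G : Matrix (Fin n) (Fin n) ℚ) (c : ℚ) (x y : Amb n) :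
    bq (extGram G c) (extV x) (extV y) = bq G x y := by
  simp only [bq, dotProduct, mulVec, Fin.sum_univ_castSucc, extV_castSucc, extV_last]
  simp [extGram]

lemma bq_lastV_extV {n : ℕ} (G : Matrix (Fin n) (Fin n) ℚ) (c : ℚ) (y : Amb n) :
    bq (extGram G c) (lastV n) (extV y) = 0 := by
  simp only [bq, dotProduct, mulVec, Fin.sum_univ_castSucc, extV_castSucc, extV_last,
    lastV_castSucc, lastV_last]
  simp [extGram]

lemma bq_extV_lastV {n : ℕ} (G : Matrix (Fin n) (Fin n) ℚ) (c : ℚ) (y : Amb n) :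
    bq (extGram G c) (extV y) (lastV n) = 0 := by
  simp only [bq, dotProduct, mulVec, Fin.sum_univ_castSucc, extV_castSucc, extV_last,
    lastV_castSucc, lastV_last]
  simp [extGram]

lemma bq_lastV_lastV {n : ℕ} (G : Matrix (Fin n) (Fin n) ℚ) (c : ℚ) :
    bq (extGram G c) (lastV n) (lastV n) = c := by
  simp only [bq, dotProduct, mulVec, Fin.sum_univ_castSucc,
    lastV_castSucc, lastV_last]
  simp [extGram]

/-- A basis of `Γ ⊕ ⟨2d⟩`: the generator of `⟨2d⟩` followed by `basG`, so that the first nine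
members lie in the radical of the form modulo `2`. -/
def basS : Fin 15 → Amb 23 := Fin.cons (lastV 22) fun j => extV (basG j)

lemma basS_mem (j : Fin 15) : basS j ∈ A17 ⊔ B17 := by
  refine Fin.cases ?_ (fun j => ?_) j
  · exact Submodule.mem_sup_right (Submodule.subset_span rfl)
  · exact Submodule.mem_sup_left (Submodule.subset_span ⟨_, basG_mem j, rfl⟩)

lemma basS_radical (d : ℕ) (i : Fin 9) (j : Fin 15) :
    ∃ t : ℤ, bq (gG17 d) (basS (Fin.castLE (by omega) i)) (basS j) = 2 * t := by
  refine Fin.cases ?_ (fun i => ?_) i <;> refine Fin.cases ?_ (fun j => ?_) j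
  · exact ⟨d, by simpa [basS, gG17] using bq_lastV_lastV gramGam (2 * (d : ℚ))⟩
  · exact ⟨0, by simpa [basS, gG17] using bq_lastV_extV gramGam (2 * (d : ℚ)) (basG j)⟩
  · exact ⟨0, (bq_extV_lastV gramGam (2 * (d : ℚ)) (basG (Fin.castLE (by omega) i))).trans
      (by simp)⟩
  · obtain ⟨t, ht⟩ := exists_int_of_den (basG_radical (i, j))
    refine ⟨t, ?_⟩
    rw [← ht, mul_div_cancel₀ _ (two_ne_zero)]
    exact bq_extV_extV gramGam (2 * (d : ℚ)) (basG (Fin.castLE (by omega) i)) (basG j)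

/-- The coordinates dual to `basS`. -/
def coef : Amb 23 →ₗ[ℚ] (Fin 15 → ℚ) where
  toFun y := Fin.cons (y (Fin.last 22)) (gamCoef fun i => y i.castSucc)
  map_add' x y := by
    ext i
    refine Fin.cases ?_ (fun i => ?_) i
    · simp
    · exact congrFun (gamCoef.map_add (fun i => x i.castSucc) fun i => y i.castSucc) i
  map_smul' c x := by
    ext i
    refine Fin.cases ?_ (fun i => ?_) i
    · simp
    · exact congrFun (gamCoef.map_smul c (fun i => x i.castSucc)) i

lemma coef_extV (x : Amb 22) : coef (extV x) = Fin.cons 0 (gamCoef x) := by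
  show (Fin.cons _ (gamCoef _) : Fin 15 → ℚ) = _
  simp only [extV_castSucc, extV_last]

lemma coef_lastV : coef (lastV 22) = Pi.single 0 1 := by
  show (Fin.cons _ (gamCoef _) : Fin 15 → ℚ) = _
  simp only [lastV_castSucc, lastV_last]
  have h : gamCoef (fun _ => 0) = 0 := gamCoef.map_zero
  rw [h]
  ext i
  refine Fin.cases ?_ (fun i => ?_) i <;> simp

lemma coef_basS (j : Fin 15) : coef (basS j) = Pi.single j 1 := by
  refine Fin.cases ?_ (fun j => ?_) j
  · exact coef_lastV
  · rw [basS, Fin.cons_succ, coef_extV, gamCoef_basG]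
    ext i
    refine Fin.cases ?_ (fun i => ?_) i <;> simp [Pi.single_apply]

/-- The dual coordinates of `basS` are integral on `Γ ⊕ ⟨2d⟩`. -/
lemma coef_integral : A17 ⊔ B17 ≤ intLat coef := by
  refine sup_le (Submodule.span_le.2 ?_) (Submodule.span_le.2 ?_)
  · rintro _ ⟨x, hx, rfl⟩ i
    rw [coef_extV]
    refine Fin.cases ⟨0, by simp⟩ (fun i => ?_) i
    exact GamLat_le_intLat hx i
  · rintro _ rfl i
    rw [coef_lastV]
    exact ⟨(Pi.single 0 1 : Fin 15 → ℤ) i, by simp [Pi.single_apply]⟩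

/-- For every `d ≥ 1`, the lattice `Γ ⊕ ⟨2d⟩` admits no primitive
embedding into `Λ_K3`. -/
theorem statement17 (d : ℕ) (hd : 1 ≤ d) :
    ¬ ∃ φ : ↥(A17 ⊔ B17) →ₗ[ℤ] (Fin 22 → ℤ), IsPrimEmb (gG17 d) (A17 ⊔ B17) gramK3 φ := by
  rintro ⟨φ, hφ⟩
  have h := card_add_card_le_of_isPrimEmb (k := 9) hφ gramK3_isSymm det_gramK3_mod_two_ne_zero
    (fun j => ⟨basS j, basS_mem j⟩) coef coef_integral coef_basS (by omega)
    (fun i j => basS_radical d i j)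
  omega

end K3Paper
end
end
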